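/- arXiv:2604.27698 — 6 statements merged into one kernel-verified Lean document; each statement's English description precedes it below -/
import Mathlib

section
/- Let k ≥ 1 be an integer and let y ∈ ℂ with Re(y) > 0. Then both series below converge absolutely and ∑_{n=1}^∞ d^{(1/k)}(n) e^{−ny} = ∑_{n=1}^∞ e^{−n^k y}/(1 − e^{−ny}). -/
/-!
With `q = e^{-y}`, so `|q| < 1`, both sides are iterated sums of the same double family
`F(n, d) = q^n` if `d ∣ n` and `d^k ≤ n`, and `0` otherwise. For fixed `n` the sum over `d` is
`d^{(1/k)}(n) q^n` (`hasSum_wigertTerm_divisors`). For fixed `d` the contributing `n` are exactly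
`n = d^k + d m` with `m ≥ 0`, since `d ∣ d^k` when `k ≥ 1`, so the sum over `n` is the geometric
series `q^{d^k} / (1 - q^d)` (`hasSum_wigertTerm_multiples`). The family is absolutely summable
because `d^{(1/k)}(n) ≤ n` and `∑ n |q|^n` converges, so the order of summation may be exchanged.
-/

noncomputable section

/-- Wigert's divisor function `d^{(1/k)}(n) = #{d : d ∣ n, d^k ≤ n}`. -/
def wigertD (k n : ℕ) : ℕ := (n.divisors.filter fun d => d ^ k ≤ n).card

/-- The common double family: `z^n` if `d ∣ n` and `d^k ≤ n` (with `n ≠ 0`), and `0` otherwise. -/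
def wigertTerm {K : Type*} [NormedField K] (k : ℕ) (z : K) (n d : ℕ) : K :=
  if d ∈ n.divisors.filter (fun d => d ^ k ≤ n) then z ^ n else 0

lemma norm_wigertTerm {K : Type*} [NormedField K] (k : ℕ) (z : K) (n d : ℕ) :
    ‖wigertTerm k z n d‖ = wigertTerm k ‖z‖ n d := by
  unfold wigertTerm
  split_ifs <;> simp

lemma wigertD_le (k n : ℕ) : wigertD k n ≤ n :=
  (Finset.card_filter_le _ _).trans (Nat.card_divisors_le_self n)

lemma hasSum_wigertTerm_divisors {K : Type*} [NormedField K] (k : ℕ) (z : K) (n : ℕ) :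
    HasSum (fun d : ℕ+ => wigertTerm k z n d) ((wigertD k n : K) * z ^ n) := by
  have h : HasSum (fun d : ℕ => wigertTerm k z n d) ((wigertD k n : K) * z ^ n) := by
    have h1 := hasSum_sum_of_ne_finset_zero (f := fun d : ℕ => wigertTerm k z n d)
      (s := n.divisors.filter (fun d => d ^ k ≤ n)) (L := SummationFilter.unconditional ℕ)
      (fun d hd => if_neg hd)
    convert h1 using 1
    have h2 : ∀ d ∈ n.divisors.filter (fun d => d ^ k ≤ n), wigertTerm k z n d = z ^ n :=
      fun d hd => if_pos hd
    rw [Finset.sum_congr rfl h2, Finset.sum_const, nsmul_eq_mul, wigertD]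
  refine (Function.Injective.hasSum_iff (f := fun d : ℕ => wigertTerm k z n d)
    PNat.coe_injective ?_).mpr h
  intro d hd
  refine if_neg fun hm => hd ?_
  exact ⟨⟨d, Nat.pos_of_mem_divisors (Finset.mem_filter.mp hm).1⟩, rfl⟩

lemma hasSum_wigertTerm_multiples {K : Type*} [NormedField K] {k : ℕ} (hk : 1 ≤ k) {z : K}
    (hz : ‖z‖ < 1) (d : ℕ+) :
    HasSum (fun n : ℕ+ => wigertTerm k z n d) (z ^ ((d : ℕ) ^ k) / (1 - z ^ (d : ℕ))) := by
  have hzd : ‖z ^ (d : ℕ)‖ < 1 := by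
    rw [norm_pow]
    exact pow_lt_one₀ (norm_nonneg _) hz d.ne_zero
  have hgeo := (hasSum_geometric_of_norm_lt_one hzd).mul_left (z ^ ((d : ℕ) ^ k))
  rw [← div_eq_mul_inv] at hgeo
  have hdk : (d : ℕ) ∣ (d : ℕ) ^ k := dvd_pow_self _ (by omega)
  let g : ℕ → ℕ+ := fun m => ⟨(d : ℕ) ^ k + d * m, Nat.add_pos_left (pow_pos d.pos k) _⟩
  have hg : Function.Injective g := by
    intro a b hab
    have h1 : (d : ℕ) ^ k + d * a = (d : ℕ) ^ k + d * b := congrArg PNat.val hab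
    exact Nat.eq_of_mul_eq_mul_left d.pos (Nat.add_left_cancel h1)
  refine (hg.hasSum_iff (f := fun n : ℕ+ => wigertTerm k z n d) ?_).mp ?_
  · intro n hn
    refine if_neg fun hm => hn ?_
    obtain ⟨h1, h2⟩ := Finset.mem_filter.mp hm
    obtain ⟨m, hm⟩ := Nat.dvd_sub (Nat.dvd_of_mem_divisors h1) hdk
    refine ⟨m, PNat.eq ?_⟩
    change (d : ℕ) ^ k + d * m = n
    omega
  · have heq : (fun n : ℕ+ => wigertTerm k z n d) ∘ g =
        fun m => z ^ ((d : ℕ) ^ k) * (z ^ (d : ℕ)) ^ m := by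
      funext m
      have hmem : (d : ℕ) ∈ (g m : ℕ).divisors.filter (fun d => d ^ k ≤ (g m : ℕ)) :=
        Finset.mem_filter.mpr ⟨Nat.mem_divisors.mpr
          ⟨dvd_add hdk (Dvd.intro _ rfl), (g m).ne_zero⟩, Nat.le_add_right _ _⟩
      change wigertTerm k z (g m) d = _
      rw [wigertTerm, if_pos hmem, ← pow_mul, ← pow_add]
      rfl
    rw [heq]
    exact hgeo

lemma summable_wigertTerm (k : ℕ) {r : ℝ} (h0 : 0 ≤ r) (h1 : r < 1) :
    Summable (fun n : ℕ+ => (wigertD k n : ℝ) * r ^ (n : ℕ)) ∧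
    Summable (fun p : ℕ+ × ℕ+ => wigertTerm k r p.1 p.2) := by
  have hs : Summable (fun n : ℕ+ => (wigertD k n : ℝ) * r ^ (n : ℕ)) := by
    have h2 : Summable (fun n : ℕ => (n : ℝ) * r ^ n) := by
      simpa using summable_pow_mul_geometric_of_norm_lt_one 1
        (by rwa [Real.norm_of_nonneg h0] : ‖r‖ < 1)
    refine Summable.of_nonneg_of_le (fun n => by positivity) (fun n => ?_)
      (h2.comp_injective PNat.coe_injective)
    exact mul_le_mul_of_nonneg_right (by exact_mod_cast wigertD_le k n) (by positivity)
  refine ⟨hs, (summable_prod_of_nonneg fun p => ?_).mpr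
    ⟨fun n => (hasSum_wigertTerm_divisors k r n).summable, ?_⟩⟩
  · simp only [Pi.zero_apply, wigertTerm]
    split_ifs <;> positivity
  · simpa only [(hasSum_wigertTerm_divisors k r _).tsum_eq] using hs

theorem wigert_lambert_series (k : ℕ) (hk : 1 ≤ k) (y : ℂ) (hy : 0 < y.re) :
    Summable (fun n : ℕ+ => ‖(wigertD k n : ℂ) * Complex.exp (-((n : ℕ) : ℂ) * y)‖) ∧
    Summable (fun n : ℕ+ =>
      ‖Complex.exp (-(((n : ℕ) : ℂ) ^ k) * y) / (1 - Complex.exp (-((n : ℕ) : ℂ) * y))‖) ∧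
    ∑' n : ℕ+, (wigertD k n : ℂ) * Complex.exp (-((n : ℕ) : ℂ) * y)
      = ∑' n : ℕ+, Complex.exp (-(((n : ℕ) : ℂ) ^ k) * y) / (1 - Complex.exp (-((n : ℕ) : ℂ) * y)) := by
  set q : ℂ := Complex.exp (-y) with hq
  have hexp (n : ℕ) : Complex.exp (-(n : ℂ) * y) = q ^ n := by
    rw [hq, ← Complex.exp_nat_mul]
    ring_nf
  have hexpk (n : ℕ) : Complex.exp (-((n : ℂ) ^ k) * y) = q ^ (n ^ k) := by
    rw [← hexp]
    push_cast
    rfl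
  have hq1 : ‖q‖ < 1 := by
    rw [hq, Complex.norm_exp]
    simpa using hy
  simp only [hexp, hexpk]
  obtain ⟨hs, hF⟩ := summable_wigertTerm k (norm_nonneg q) hq1
  have hFn : Summable (fun p : ℕ+ × ℕ+ => ‖wigertTerm k q p.1 p.2‖) := by
    simpa only [norm_wigertTerm] using hF
  have hFs : Summable (fun p : ℕ+ × ℕ+ => ‖wigertTerm k q p.2 p.1‖) := hFn.prod_symm
  have hFc : Summable (Function.uncurry fun n d : ℕ+ => wigertTerm k q n d) := hFn.of_norm
  refine ⟨by simpa using hs, ?_, ?_⟩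
  · refine Summable.of_nonneg_of_le (fun d => norm_nonneg _) (fun d => ?_) hFs.prod
    rw [← (hasSum_wigertTerm_multiples hk hq1 d).tsum_eq]
    exact norm_tsum_le_tsum_norm (hFs.prod_factor d)
  · rw [← tsum_congr fun n : ℕ+ => (hasSum_wigertTerm_divisors k q n).tsum_eq,
      ← tsum_congr fun d : ℕ+ => (hasSum_wigertTerm_multiples hk hq1 d).tsum_eq]
    exact hFc.tsum_comm.symm
end
end

section
/- Let k ≥ 1 be an integer and let s ∈ ℂ with Re(s) > 1. Then the double series ∑_{m ≥ 1, n ≥ 0} (m^k + mn)^{−s} converges absolutely and equals ∑_{j=1}^∞ d^{(1/k)}(j) j^{−s}. -/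
noncomputable section

/-!
Since `k ≥ 1`, `m ^ k + m * n ≥ m * (n + 1)`, so the double series is dominated in absolute value
by the product of two copies of the convergent series `∑ m ^ (-Re s)`; this gives absolute
convergence. The terms may then be grouped by the value `j = m ^ k + m * n`. The pairs `(m, n)`
with value `j` correspond, via `(m, n) ↦ m`, to the divisors `m` of `j` with `m ^ k ≤ j`: given
such an `m`, the number `j - m ^ k` is a nonnegative multiple of `m`. So each `j ^ (-s)` occurs
`wigertD k j` times.
-/

/-- The value `m ^ k + m * n` as a positive integer, used to group the terms of the double sum. -/
def wigertVal (k : ℕ) (p : ℕ+ × ℕ) : ℕ+ :=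
  ⟨(p.1 : ℕ) ^ k + (p.1 : ℕ) * p.2, Nat.add_pos_left (pow_pos p.1.pos k) _⟩

/-- A fibre of `wigertVal` is counted by its projection to the first coordinate; `1 ≤ k` ensures
that `m ∣ m ^ k`. -/
lemma card_fiber_wigertVal (k : ℕ) (hk : 1 ≤ k) (j : ℕ+) :
    Nat.card (wigertVal k ⁻¹' {j}) = wigertD k j := by
  have hval : ∀ p ∈ wigertVal k ⁻¹' {j}, (p.1 : ℕ) ^ k + (p.1 : ℕ) * p.2 = j := fun p hp =>
    congrArg PNat.val (Set.mem_singleton_iff.1 hp)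
  rw [wigertD, ← Nat.card_eq_finsetCard]
  refine Nat.card_congr (Equiv.ofBijective (fun p => ⟨(p.1.1 : ℕ), ?_⟩) ⟨?_, ?_⟩)
  · have h := hval p.1 p.2
    refine Finset.mem_filter.2 ⟨Nat.mem_divisors.2 ⟨?_, j.ne_zero⟩, by omega⟩
    rw [← h]
    exact dvd_add (dvd_pow_self _ (by omega)) (dvd_mul_right _ _)
  · rintro ⟨⟨m, n⟩, h⟩ ⟨⟨m', n'⟩, h'⟩ heq
    have hm' : (m : ℕ) = (m' : ℕ) := by simpa using heq
    have hm : m = m' := PNat.coe_injective hm'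
    subst hm
    have hn : (m : ℕ) * n = m * n' := by
      have := hval _ h
      have := hval _ h'
      dsimp only at *
      omega
    obtain rfl := Nat.eq_of_mul_eq_mul_left m.pos hn
    rfl
  · rintro ⟨d, hd⟩
    obtain ⟨hd, hle⟩ := Finset.mem_filter.1 hd
    have hdvd := Nat.dvd_of_mem_divisors hd
    obtain ⟨n, hn⟩ := Nat.dvd_sub hdvd (dvd_pow_self d (by omega : k ≠ 0))
    refine ⟨⟨(⟨d, Nat.pos_of_mem_divisors hd⟩, n), PNat.coe_injective ?_⟩, rfl⟩
    change d ^ k + d * n = j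
    omega

lemma summable_norm_double (k : ℕ) (hk : 1 ≤ k) (s : ℂ) (hs : 1 < s.re) :
    Summable (fun p : ℕ+ × ℕ =>
      ‖((((p.1 : ℕ) ^ k + (p.1 : ℕ) * p.2 : ℕ)) : ℂ) ^ (-s)‖) := by
  have h0 : Summable (fun n : ℕ => (n : ℝ) ^ (-s.re)) := Real.summable_nat_rpow.2 (by linarith)
  have h1 : Summable (fun m : ℕ+ => ((m : ℕ) : ℝ) ^ (-s.re)) :=
    h0.comp_injective PNat.coe_injective
  have h2 : Summable (fun n : ℕ => ((n + 1 : ℕ) : ℝ) ^ (-s.re)) :=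
    h0.comp_injective (add_left_injective 1)
  have h3 := h1.mul_of_nonneg h2 (fun _ => by positivity) (fun _ => by positivity)
  refine Summable.of_nonneg_of_le (fun _ => norm_nonneg _) ?_ h3
  rintro ⟨m, n⟩
  have hm := m.pos
  have hle : (m : ℕ) * (n + 1) ≤ (m : ℕ) ^ k + m * n := by
    have := Nat.le_self_pow (by omega : k ≠ 0) (m : ℕ)
    linarith
  have hpos : 0 < (m : ℕ) * (n + 1) := by positivity
  dsimp only
  rw [Complex.norm_natCast_cpow_of_pos (hpos.trans_le hle), Complex.neg_re,
    ← Real.mul_rpow (by positivity) (by positivity), ← Nat.cast_mul]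
  exact Real.rpow_le_rpow_of_nonpos (by exact_mod_cast hpos) (by exact_mod_cast hle) (by linarith)

theorem wigert_dirichlet_series_as_double_sum (k : ℕ) (hk : 1 ≤ k) (s : ℂ) (hs : 1 < s.re) :
    Summable (fun p : ℕ+ × ℕ =>
      ‖((((p.1 : ℕ) ^ k + (p.1 : ℕ) * p.2 : ℕ)) : ℂ) ^ (-s)‖) ∧
    ∑' p : ℕ+ × ℕ, ((((p.1 : ℕ) ^ k + (p.1 : ℕ) * p.2 : ℕ)) : ℂ) ^ (-s)
      = ∑' j : ℕ+, (wigertD k j : ℂ) * ((j : ℕ) : ℂ) ^ (-s) := by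
  have hsum := summable_norm_double k hk s hs
  refine ⟨hsum, ?_⟩
  rw [← (hsum.of_norm.hasSum.tsum_fiberwise (wigertVal k)).tsum_eq]
  refine tsum_congr fun j => ?_
  have hconst : ∀ p : wigertVal k ⁻¹' {j},
      ((((p.1.1 : ℕ) ^ k + (p.1.1 : ℕ) * p.1.2 : ℕ)) : ℂ) ^ (-s) = ((j : ℕ) : ℂ) ^ (-s) := by
    rintro ⟨p, hp⟩
    exact congrArg (fun i : ℕ+ => ((i : ℕ) : ℂ) ^ (-s)) (Set.mem_singleton_iff.1 hp)
  rw [tsum_congr hconst, tsum_const, card_fiber_wigertVal k hk, nsmul_eq_mul]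
end
end

section
/- For s ∈ ℂ with Re(s) > 1, ∑_{n=1}^∞ d^{(1/2)}(n) n^{−s} = (1/2)(ζ(s)² + ζ(2s)). Equivalently, ∑_{m,n ≥ 1} (m² + mn)^{−s} = (1/2)(ζ(s)² − ζ(2s)). -/
/-!
The function `f (a, b) = a^(-s) * b^(-s)` is absolutely summable over pairs of positive integers,
with sum `ζ(s)²`. The pairs split into `a < b`, `b < a` and `a = b`; the first two parts have equal
sums by the symmetry of `f`, and the diagonal sums to `ζ(2s)`. Hence the sum over `a < b` is
`(ζ(s)² - ζ(2s)) / 2` (`tsum_lt`), and adding the diagonal gives `(ζ(s)² + ζ(2s)) / 2` for the sum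
over `a ≤ b` (`tsum_le`).

Both series in the theorem are rearrangements of these. The substitution `b = m + n`, `a = m`
turns the sum over `a < b` into the sum of `(m² + mn)^(-s)`. Grouping the pairs `a ≤ b` by their
product `n = ab`, the condition `a ≤ b` becomes `a² ≤ n`, so `n^(-s)` is counted `d^{(1/2)}(n)`
times.
-/

noncomputable section

/-- The summand `a^(-s) * b^(-s)` of the double series for `ζ(s)²`. -/
def zetaPair (s : ℂ) (p : ℕ+ × ℕ+) : ℂ := ((p.1 : ℕ) : ℂ) ^ (-s) * ((p.2 : ℕ) : ℂ) ^ (-s)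

lemma zetaPair_eq (s : ℂ) (p : ℕ+ × ℕ+) :
    zetaPair s p = (((p.1 : ℕ) * (p.2 : ℕ) : ℕ) : ℂ) ^ (-s) := by
  rw [zetaPair, Nat.cast_mul, Complex.natCast_mul_natCast_cpow]

lemma summable_norm_pnat_cpow (s : ℂ) (hs : 1 < s.re) :
    Summable fun n : ℕ+ => ‖((n : ℕ) : ℂ) ^ (-s)‖ := by
  have h := (Complex.summable_one_div_nat_cpow.mpr hs).norm
  refine (h.comp_injective PNat.coe_injective).congr fun n => ?_
  simp [Complex.cpow_neg]

lemma tsum_pnat_cpow (s : ℂ) (hs : 1 < s.re) :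
    ∑' n : ℕ+, ((n : ℕ) : ℂ) ^ (-s) = riemannZeta s := by
  have hs0 : s ≠ 0 := by rintro rfl; simp at hs; linarith
  rw [zeta_eq_tsum_one_div_nat_cpow hs,
    ← PNat.coe_injective.tsum_eq (f := fun n : ℕ => 1 / (n : ℂ) ^ s)]
  · simp [Complex.cpow_neg]
  · intro n hn
    rcases Nat.eq_zero_or_pos n with rfl | h
    · simp [hs0] at hn
    · exact ⟨⟨n, h⟩, rfl⟩

lemma summable_zetaPair (s : ℂ) (hs : 1 < s.re) : Summable (zetaPair s) := by
  have h := summable_norm_pnat_cpow s hs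
  exact (summable_mul_of_summable_norm h h).congr fun p => by rw [zetaPair]

lemma tsum_zetaPair (s : ℂ) (hs : 1 < s.re) : ∑' p, zetaPair s p = riemannZeta s ^ 2 := by
  rw [sq, ← tsum_pnat_cpow s hs]
  exact (tsum_mul_tsum_of_summable_norm (summable_norm_pnat_cpow s hs)
    (summable_norm_pnat_cpow s hs)).symm

lemma tsum_diag (s : ℂ) (hs : 1 < s.re) :
    ∑' p, {p : ℕ+ × ℕ+ | p.1 = p.2}.indicator (zetaPair s) p = riemannZeta (2 * s) := by
  have hi : Function.Injective fun n : ℕ+ => (n, n) := fun a b h => (Prod.ext_iff.mp h).1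
  rw [← hi.tsum_eq, ← tsum_pnat_cpow (2 * s) (by simp; linarith)]
  · refine tsum_congr fun n => ?_
    have hn : ((n : ℕ) : ℂ) ≠ 0 := by simp
    simp only [Set.indicator, Set.mem_ofPred_eq, if_true, zetaPair]
    rw [← Complex.cpow_add _ _ hn]
    congr 1; ring
  · rintro ⟨a, b⟩ h
    have h' : (a, b) ∈ {p : ℕ+ × ℕ+ | p.1 = p.2} := Set.mem_of_indicator_ne_zero h
    simp only [Set.mem_ofPred_eq] at h'
    exact ⟨a, by simp [h']⟩

lemma tsum_lt (s : ℂ) (hs : 1 < s.re) :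
    ∑' p, {p : ℕ+ × ℕ+ | p.1 < p.2}.indicator (zetaPair s) p
      = (riemannZeta s ^ 2 - riemannZeta (2 * s)) / 2 := by
  have hf := summable_zetaPair s hs
  have hsymm : ∑' p, {p : ℕ+ × ℕ+ | p.2 < p.1}.indicator (zetaPair s) p
      = ∑' p, {p : ℕ+ × ℕ+ | p.1 < p.2}.indicator (zetaPair s) p := by
    rw [← (Equiv.prodComm ℕ+ ℕ+).tsum_eq]
    refine tsum_congr fun p => ?_
    simp [Set.indicator, zetaPair, mul_comm]
  have hsplit : ∑' p, zetaPair s p =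
      ∑' p, {p : ℕ+ × ℕ+ | p.1 < p.2}.indicator (zetaPair s) p
      + ∑' p, {p : ℕ+ × ℕ+ | p.2 < p.1}.indicator (zetaPair s) p
      + ∑' p, {p : ℕ+ × ℕ+ | p.1 = p.2}.indicator (zetaPair s) p := by
    rw [← (hf.indicator _).tsum_add (hf.indicator _),
      ← ((hf.indicator _).add (hf.indicator _)).tsum_add (hf.indicator _)]
    refine tsum_congr fun p => ?_
    simp only [Set.indicator, Set.mem_ofPred_eq]
    rcases lt_trichotomy p.1 p.2 with h | h | h
    · simp [h, h.ne, h.not_gt]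
    · simp [h]
    · simp [h, h.ne', h.not_gt]
  rw [hsymm, tsum_diag s hs, tsum_zetaPair s hs] at hsplit
  linear_combination -hsplit / 2

lemma tsum_le (s : ℂ) (hs : 1 < s.re) :
    ∑' p, {p : ℕ+ × ℕ+ | p.1 ≤ p.2}.indicator (zetaPair s) p
      = (riemannZeta s ^ 2 + riemannZeta (2 * s)) / 2 := by
  have hf := summable_zetaPair s hs
  have hsplit : ∑' p, {p : ℕ+ × ℕ+ | p.1 ≤ p.2}.indicator (zetaPair s) p =
      ∑' p, {p : ℕ+ × ℕ+ | p.1 < p.2}.indicator (zetaPair s) p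
      + ∑' p, {p : ℕ+ × ℕ+ | p.1 = p.2}.indicator (zetaPair s) p := by
    rw [← (hf.indicator _).tsum_add (hf.indicator _)]
    refine tsum_congr fun p => ?_
    simp only [Set.indicator, Set.mem_ofPred_eq]
    rcases lt_trichotomy p.1 p.2 with h | h | h
    · simp [h.le, h, h.ne]
    · simp [h]
    · simp [h.not_ge, h.ne', h.not_gt]
  rw [hsplit, tsum_lt s hs, tsum_diag s hs]
  ring

/-- A factorisation `n = ab` has `a ≤ b` exactly when `a ^ 2 ≤ n`, so such factorisations are
counted by `wigertD 2 n`. -/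
lemma sum_antidiagonal_le (n : ℕ) (c : ℂ) :
    ∑ x ∈ n.divisorsAntidiagonal, (if x.1 ≤ x.2 then c else 0) = wigertD 2 n * c := by
  have h : ∀ x ∈ n.divisorsAntidiagonal,
      (if x.1 ≤ x.2 then c else 0) = if x.1 ^ 2 ≤ n then c else 0 := by
    intro x hx
    obtain ⟨rfl, h0⟩ := Nat.mem_divisorsAntidiagonal.mp hx
    have hpos : 0 < x.1 := Nat.pos_of_ne_zero (left_ne_zero_of_mul h0)
    have : x.1 ^ 2 ≤ x.1 * x.2 ↔ x.1 ≤ x.2 := by rw [sq, Nat.mul_le_mul_left_iff hpos]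
    simp [this]
  rw [Finset.sum_congr rfl h,
    Nat.sum_divisorsAntidiagonal (fun a _ => if a ^ 2 ≤ n then c else 0),
    ← Finset.sum_filter, Finset.sum_const, nsmul_eq_mul, wigertD]

theorem wigert_dirichlet_series_k_two (s : ℂ) (hs : 1 < s.re) :
    (∑' n : ℕ+, (wigertD 2 n : ℂ) * ((n : ℕ) : ℂ) ^ (-s)
      = (riemannZeta s ^ 2 + riemannZeta (2 * s)) / 2) ∧
    (∑' p : ℕ+ × ℕ+, ((((p.1 : ℕ) ^ 2 + (p.1 : ℕ) * (p.2 : ℕ) : ℕ)) : ℂ) ^ (-s)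
      = (riemannZeta s ^ 2 - riemannZeta (2 * s)) / 2) := by
  constructor
  · rw [← tsum_le s hs, ← sigmaAntidiagonalEquivProd.tsum_eq]
    have hsum := sigmaAntidiagonalEquivProd.summable_iff.mpr
      ((summable_zetaPair s hs).indicator {p : ℕ+ × ℕ+ | p.1 ≤ p.2})
    refine Eq.trans (tsum_congr fun n => ?_) hsum.tsum_sigma.symm
    rw [← sum_antidiagonal_le, ← Finset.tsum_subtype]
    refine tsum_congr fun x => ?_
    have hx := (Nat.mem_divisorsAntidiagonal.mp x.2).1
    simp only [Function.comp, Set.indicator, Set.mem_ofPred_eq, zetaPair_eq]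
    have e1 : (((sigmaAntidiagonalEquivProd ⟨n, x⟩).1 : ℕ+) : ℕ) = x.1.1 := rfl
    have e2 : (((sigmaAntidiagonalEquivProd ⟨n, x⟩).2 : ℕ+) : ℕ) = x.1.2 := rfl
    simp only [← PNat.coe_le_coe, e1, e2, hx]
  · have hi : Function.Injective fun p : ℕ+ × ℕ+ => (p.1, p.1 + p.2) := by
      rintro ⟨a, b⟩ ⟨c, d⟩ h
      simp only [Prod.mk.injEq] at h
      obtain ⟨rfl, h⟩ := h
      simpa using h
    rw [← tsum_lt s hs,
      ← hi.tsum_eq (f := {p : ℕ+ × ℕ+ | p.1 < p.2}.indicator (zetaPair s))]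
    · refine tsum_congr fun p => ?_
      have : p.1 < p.1 + p.2 := PNat.lt_add_right _ _
      simp only [Set.indicator, Set.mem_ofPred_eq, this, if_true, zetaPair_eq, PNat.add_coe]
      congr 2; ring
    · rintro ⟨a, b⟩ h
      have h' : (a, b) ∈ {p : ℕ+ × ℕ+ | p.1 < p.2} := Set.mem_of_indicator_ne_zero h
      simp only [Set.mem_ofPred_eq] at h'
      exact ⟨(a, b - a), by simp [PNat.add_sub_of_lt h']⟩
end
end

section
/- Let k ≥ 2 be an integer, s ∈ ℂ with Re(s) > 1, and c ∈ ℝ with −Re(s) < c < −1. Then ∑_{m,n ≥ 1} (m^k + mn)^{−s} = (1/(2π)) ∫_{−∞}^{∞} [Γ(s + c + it) Γ(−(c + it)) / Γ(s)] · ζ(−(c + it)) · ζ(ks + (k−1)(c + it)) dt, the integral converging absolutely. -/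
/-!
For `x > 0` and `-Re s < c < 0` there is the Mellin-Barnes formula
`(1 + x)^(-s) = (1/2π) ∫ Γ(s+w) Γ(-w) / Γ(s) * x^w dt`, with `w = c + it`. It is Mellin inversion:
the substitution `u = x / (1 + x)` turns the Beta integral into the Mellin transform of
`(1 + x)^(-s)`, whose value at `z` is therefore `Γ(z) Γ(s-z) / Γ(s)` (`mellin_one_add_cpow`). The
Gamma quotient is integrable on the line since `|Γ(z)| ≤ Γ(Re z)` and two applications of the
functional equation give decay `O(1 / (1 + t²))` (`integrable_Gamma_mul_Gamma`).

Writing `m^k + mn = m^k (1 + n / m^(k-1))`, each term of the double sum becomes the integral of the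
same Gamma quotient times `m^(-ks-(k-1)w) n^w` (`summand_eq_integral`). On the line, both
`Re (-w) = -c` and `Re (ks + (k-1)w)` exceed `1`, so the sum of the norms of the integrands is
dominated by a product of two convergent Dirichlet series times an integrable function. Sum and
integral can be interchanged, and summing over `n` and `m` gives the two zeta factors.
-/

noncomputable section
open MeasureTheory Set

theorem ofReal_cpow_eq_exp {x : ℝ} (hx : 0 < x) (z : ℂ) :
    (x : ℂ) ^ z = Complex.exp ((Real.log x : ℝ) * z) := by
  rw [Complex.cpow_def_of_ne_zero (by exact_mod_cast hx.ne'), Complex.ofReal_log hx.le]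

theorem image_div_one_add : (fun x : ℝ => x / (1 + x)) '' Ioi 0 = Ioo 0 1 := by
  ext y
  constructor
  · rintro ⟨x, hx, rfl⟩
    have hx : 0 < x := hx
    exact ⟨by positivity, by rw [div_lt_one (by positivity)]; linarith⟩
  · rintro ⟨h0, h1⟩
    have h2 : 0 < 1 - y := by linarith
    refine ⟨y / (1 - y), div_pos h0 h2, ?_⟩
    have : 1 + y / (1 - y) = 1 / (1 - y) := by field_simp; ring
    simp only [this]
    field_simp

theorem hasDerivWithinAt_div_one_add (x : ℝ) (hx : x ∈ Ioi (0 : ℝ)) :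
    HasDerivWithinAt (fun x : ℝ => x / (1 + x)) (1 / (1 + x) ^ 2) (Ioi 0) x := by
  have hx : 0 < x := hx
  have h := (hasDerivAt_id' x).fun_div ((hasDerivAt_id' x).const_add 1) (by positivity)
  rw [show 1 / (1 + x) ^ 2 = (1 * (1 + x) - x * 1) / (1 + x) ^ 2 by congr 1; ring]
  exact h.hasDerivWithinAt

theorem injOn_div_one_add : InjOn (fun x : ℝ => x / (1 + x)) (Ioi 0) := by
  intro x hx y hy h
  have hx : 0 < x := hx
  have hy : 0 < y := hy
  simp only at h
  rw [div_eq_div_iff (by positivity) (by positivity)] at h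
  linarith

/-- The substitution `u = x / (1 + x)` carries the integrand of `B(z, s - z)` to the Mellin
integrand of `(1 + x)^(-s)`. -/
theorem beta_integrand_subst (s z : ℂ) {x : ℝ} (hx : 0 < x) :
    |1 / (1 + x) ^ 2| • (((x / (1 + x) : ℝ) : ℂ) ^ (z - 1) *
      (1 - ((x / (1 + x) : ℝ) : ℂ)) ^ (s - z - 1)) =
    (x : ℂ) ^ (z - 1) • (((1 + x : ℝ) : ℂ) ^ (-s)) := by
  have h1 : 0 < 1 + x := by positivity
  have e1 : (1 - ((x / (1 + x) : ℝ) : ℂ)) = (((1 + x)⁻¹ : ℝ) : ℂ) := by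
    rw [← Complex.ofReal_one, ← Complex.ofReal_sub]
    congr 1
    field_simp
    ring
  have e2 : ((|1 / (1 + x) ^ 2| : ℝ) : ℂ) = Complex.exp ((Real.log (1 + x) : ℝ) * (-2)) := by
    rw [← ofReal_cpow_eq_exp h1, abs_of_pos (by positivity), Complex.cpow_neg]
    norm_num
  rw [Complex.real_smul, smul_eq_mul, e1, e2, ofReal_cpow_eq_exp (by positivity),
    ofReal_cpow_eq_exp (by positivity), ofReal_cpow_eq_exp hx, ofReal_cpow_eq_exp h1,
    Real.log_div hx.ne' h1.ne', Real.log_inv, ← Complex.exp_add, ← Complex.exp_add,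
    ← Complex.exp_add]
  congr 1
  push_cast
  ring

theorem mellinConvergent_one_add_cpow {s z : ℂ} (hz : 0 < z.re) (hzs : z.re < s.re) :
    MellinConvergent (fun x : ℝ => ((1 + x : ℝ) : ℂ) ^ (-s)) z := by
  have h := Complex.betaIntegral_convergent hz (v := s - z) (by simpa using hzs)
  rw [intervalIntegrable_iff_integrableOn_Ioo_of_le zero_le_one, ← image_div_one_add,
    integrableOn_image_iff_integrableOn_abs_deriv_smul measurableSet_Ioi
      hasDerivWithinAt_div_one_add injOn_div_one_add] at h
  exact h.congr_fun (fun x hx => beta_integrand_subst s z hx) measurableSet_Ioi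

theorem mellin_one_add_cpow {s z : ℂ} (hz : 0 < z.re) (hzs : z.re < s.re) :
    mellin (fun x : ℝ => ((1 + x : ℝ) : ℂ) ^ (-s)) z =
      Complex.Gamma (s - z) * Complex.Gamma z / Complex.Gamma s := by
  have hG := Complex.Gamma_mul_Gamma_eq_betaIntegral hz (t := s - z) (by simpa using hzs)
  rw [add_sub_cancel] at hG
  rw [mul_comm, hG, mul_div_cancel_left₀ _ (Complex.Gamma_ne_zero_of_re_pos (hz.trans hzs)),
    Complex.betaIntegral, intervalIntegral.integral_of_le zero_le_one, integral_Ioc_eq_integral_Ioo,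
    ← image_div_one_add, integral_image_eq_integral_abs_deriv_smul measurableSet_Ioi
      hasDerivWithinAt_div_one_add injOn_div_one_add]
  exact (setIntegral_congr_fun measurableSet_Ioi
    fun x hx => beta_integrand_subst s z hx).symm

theorem norm_Gamma_le {z : ℂ} (hz : 0 < z.re) : ‖Complex.Gamma z‖ ≤ Real.Gamma z.re := by
  rw [Complex.Gamma_eq_integral hz, Real.Gamma_eq_integral hz]
  refine (norm_integral_le_integral_norm _).trans_eq
    (setIntegral_congr_fun measurableSet_Ioi fun x hx => ?_)
  have hx : 0 < x := hx
  simp only [norm_mul, Complex.norm_cpow_eq_rpow_re_of_pos hx, Complex.norm_real,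
    Real.norm_eq_abs, Real.abs_exp, Complex.sub_re, Complex.one_re]

/-- With `a = -(c + it)`, the relation `Γ(a + 2) = (a + 1) a Γ(a)` and `|Γ(z)| ≤ Γ(Re z)` bound the
integrand by a multiple of `1 / (1 + t²)`. -/
theorem integrable_Gamma_mul_Gamma {s : ℂ} {c : ℝ} (hc1 : -s.re < c) (hc2 : c < -1) :
    Integrable (fun t : ℝ => Complex.Gamma (s + ((c : ℂ) + (t : ℂ) * Complex.I)) *
        Complex.Gamma (-((c : ℂ) + (t : ℂ) * Complex.I)) / Complex.Gamma s) := by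
  refine Integrable.div_const ?_ _
  have hre1 (t : ℝ) : (s + ((c : ℂ) + (t : ℂ) * Complex.I)).re = s.re + c := by simp
  have hre2 (t : ℝ) : (-((c : ℂ) + (t : ℂ) * Complex.I)).re = -c := by simp
  have hcont (z : ℂ) (hz : 0 < z.re) : ContinuousAt Complex.Gamma z := by
    refine (Complex.differentiableAt_Gamma z fun m hm => ?_).continuousAt
    rw [hm] at hz
    simp at hz
    linarith [(Nat.cast_nonneg m : (0 : ℝ) ≤ m)]
  refine Integrable.mono' (integrable_inv_one_add_sq.const_mul
    (Real.Gamma (s.re + c) * Real.Gamma (-c + 2))) ?_ (Filter.Eventually.of_forall fun t => ?_)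
  · refine (Continuous.mul ?_ ?_).aestronglyMeasurable <;> rw [continuous_iff_continuousAt] <;>
      intro t
    · exact ContinuousAt.comp (hcont _ (by rw [hre1]; linarith))
        (f := fun t : ℝ => s + ((c : ℂ) + (t : ℂ) * Complex.I)) (by fun_prop)
    · exact ContinuousAt.comp (hcont _ (by rw [hre2]; linarith))
        (f := fun t : ℝ => -((c : ℂ) + (t : ℂ) * Complex.I)) (by fun_prop)
  · set a : ℂ := -((c : ℂ) + (t : ℂ) * Complex.I) with ha
    have har : a.re = -c := hre2 t
    have hai : a.im = -t := by simp [ha]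
    have ha0 : a ≠ 0 := fun h => by rw [h] at har; simp at har; linarith
    have ha1 : a + 1 ≠ 0 := fun h => by
      have := congrArg Complex.re h
      simp [har] at this
      linarith
    have hrec : Complex.Gamma (a + 2) = (a + 1) * a * Complex.Gamma a := by
      rw [show a + 2 = (a + 1) + 1 by ring, Complex.Gamma_add_one _ ha1,
        Complex.Gamma_add_one _ ha0, mul_assoc]
    have hb : ‖Complex.Gamma (a + 2)‖ ≤ Real.Gamma (-c + 2) := by
      have h := norm_Gamma_le (z := a + 2) (by simp [har]; linarith)
      simpa [har] using h
    have h1 : ‖Complex.Gamma (s + ((c : ℂ) + (t : ℂ) * Complex.I))‖ ≤ Real.Gamma (s.re + c) := by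
      have h := norm_Gamma_le (z := s + ((c : ℂ) + (t : ℂ) * Complex.I))
        (by rw [hre1]; linarith)
      rwa [hre1] at h
    have hsq : 1 + t ^ 2 ≤ ‖a‖ ^ 2 := by
      rw [Complex.sq_norm, Complex.normSq_apply, har, hai]
      nlinarith
    have hle : ‖a‖ ≤ ‖a + 1‖ := by
      refine (sq_le_sq₀ (norm_nonneg _) (norm_nonneg _)).1 ?_
      rw [Complex.sq_norm, Complex.normSq_apply, Complex.sq_norm, Complex.normSq_apply]
      simp [har, hai]
      nlinarith
    have h2 : ‖Complex.Gamma a‖ ≤ Real.Gamma (-c + 2) * (1 + t ^ 2)⁻¹ := by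
      rw [← div_eq_mul_inv, le_div_iff₀ (by positivity)]
      rw [hrec, norm_mul, norm_mul] at hb
      refine le_trans ?_ hb
      rw [mul_comm]
      refine mul_le_mul_of_nonneg_right ?_ (norm_nonneg _)
      nlinarith [norm_nonneg a]
    rw [norm_mul, mul_assoc]
    exact mul_le_mul h1 h2 (norm_nonneg _) (Real.Gamma_pos_of_pos (by linarith)).le

/-- The Mellin-Barnes integral for `(1 + x)^(-s)`, from Mellin inversion on the line
`Re z = -c`. -/
theorem mellin_barnes {s : ℂ} {c : ℝ} (hc1 : -s.re < c) (hc2 : c < -1) {x : ℝ} (hx : 0 < x) :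
    ((1 + x : ℝ) : ℂ) ^ (-s) = ((1 / (2 * Real.pi) : ℝ) : ℂ) * ∫ t : ℝ,
      Complex.Gamma (s + ((c : ℂ) + (t : ℂ) * Complex.I)) *
        Complex.Gamma (-((c : ℂ) + (t : ℂ) * Complex.I)) / Complex.Gamma s *
        (x : ℂ) ^ ((c : ℂ) + (t : ℂ) * Complex.I) := by
  -- on the line `Re z = -c` the point at height `-t` is `-(c + it)`
  have hM (t : ℝ) : mellin (fun x : ℝ => ((1 + x : ℝ) : ℂ) ^ (-s))
      (((-c : ℝ) : ℂ) + ((-t : ℝ) : ℂ) * Complex.I) =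
      Complex.Gamma (s + ((c : ℂ) + (t : ℂ) * Complex.I)) *
        Complex.Gamma (-((c : ℂ) + (t : ℂ) * Complex.I)) / Complex.Gamma s := by
    rw [mellin_one_add_cpow (by simp; linarith) (by simp; linarith)]
    push_cast
    congr 3 <;> ring_nf
  have hint : Complex.VerticalIntegrable (mellin (fun x : ℝ => ((1 + x : ℝ) : ℂ) ^ (-s))) (-c) := by
    have h := (integrable_Gamma_mul_Gamma hc1 hc2).comp_neg
    refine h.congr (Filter.Eventually.of_forall fun t => ?_)
    have := hM (-t)
    rw [neg_neg] at this
    exact this.symm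
  have hcont : ContinuousAt (fun x : ℝ => ((1 + x : ℝ) : ℂ) ^ (-s)) x := by
    refine ContinuousAt.cpow (by fun_prop) (by fun_prop) ?_
    exact Complex.ofReal_mem_slitPlane.2 (by positivity)
  have h := mellinInv_mellin_eq (-c) _ hx
    (mellinConvergent_one_add_cpow (by simp; linarith) (by simp; linarith)) hint hcont
  rw [← h, mellinInv, ← integral_neg_eq_self, Complex.real_smul]
  congr 1
  refine integral_congr_ae (Filter.Eventually.of_forall fun t => ?_)
  simp only
  rw [hM, smul_eq_mul, mul_comm]
  congr 2
  push_cast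
  ring

theorem summable_pnat_rpow {r : ℝ} (hr : r < -1) : Summable fun n : ℕ+ => ((n : ℕ) : ℝ) ^ r :=
  (Real.summable_nat_rpow.2 hr).comp_injective PNat.coe_injective

theorem norm_one_div_pnat_cpow (n : ℕ+) (z : ℂ) :
    ‖1 / ((n : ℕ) : ℂ) ^ z‖ = ((n : ℕ) : ℝ) ^ (-z.re) := by
  rw [one_div, ← Complex.cpow_neg, Complex.norm_natCast_cpow_of_pos n.pos, Complex.neg_re]

theorem zeta_eq_tsum_pnat {z : ℂ} (hz : 1 < z.re) :
    riemannZeta z = ∑' n : ℕ+, 1 / ((n : ℕ) : ℂ) ^ z := by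
  rw [zeta_eq_tsum_one_div_nat_add_one_cpow hz,
    tsum_pnat_eq_tsum_succ (f := fun n : ℕ => 1 / (n : ℂ) ^ z)]
  simp

theorem norm_zeta_le {z : ℂ} (hz : 1 < z.re) :
    ‖riemannZeta z‖ ≤ ∑' n : ℕ+, ((n : ℕ) : ℝ) ^ (-z.re) := by
  rw [zeta_eq_tsum_pnat hz]
  simp_rw [← norm_one_div_pnat_cpow]
  refine norm_tsum_le_tsum_norm ?_
  simp_rw [norm_one_div_pnat_cpow]
  exact summable_pnat_rpow (by linarith)

/-- On a vertical line `Re z = r > 1` zeta is continuous and bounded, hence a multiplier of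
integrable functions. -/
theorem integrable_mul_zeta {g : ℝ → ℂ} (hg : Integrable g) {f : ℝ → ℂ} (hf : Continuous f)
    {r : ℝ} (hr : 1 < r) (hre : ∀ t, (f t).re = r) :
    Integrable fun t => g t * riemannZeta (f t) := by
  refine hg.mul_bdd (c := ∑' n : ℕ+, ((n : ℕ) : ℝ) ^ (-r)) ?_
    (Filter.Eventually.of_forall fun t => ?_)
  · refine Continuous.aestronglyMeasurable (continuous_iff_continuousAt.2 fun t => ?_)
    refine ContinuousAt.comp (differentiableAt_riemannZeta fun h => ?_).continuousAt
      hf.continuousAt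
    have := hre t
    rw [h] at this
    simp at this
    linarith
  · have := norm_zeta_le (z := f t) (by rw [hre]; exact hr)
    rwa [hre] at this

theorem summand_factor (k : ℕ) (hk : 1 ≤ k) (s w : ℂ) (m n : ℕ+) :
    ((((m : ℕ) ^ k : ℕ) : ℝ) : ℂ) ^ (-s) * (((n : ℕ) / (m : ℕ) ^ (k - 1) : ℝ) : ℂ) ^ w =
      1 / ((m : ℕ) : ℂ) ^ ((k : ℂ) * s + ((k : ℂ) - 1) * w) * (1 / ((n : ℕ) : ℂ) ^ (-w)) := by
  have hm : (0 : ℝ) < (m : ℕ) := by exact_mod_cast m.pos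
  have hn : (0 : ℝ) < (n : ℕ) := by exact_mod_cast n.pos
  rw [one_div, one_div, ← Complex.cpow_neg, ← Complex.cpow_neg, ← Complex.ofReal_natCast (m : ℕ),
    ← Complex.ofReal_natCast (n : ℕ), ofReal_cpow_eq_exp (by push_cast; positivity),
    ofReal_cpow_eq_exp (by positivity), ofReal_cpow_eq_exp hm, ofReal_cpow_eq_exp hn,
    ← Complex.exp_add, ← Complex.exp_add, Nat.cast_pow, Real.log_pow,
    Real.log_div hn.ne' (by positivity), Real.log_pow]
  congr 1
  push_cast [Nat.cast_sub hk]
  ring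

theorem summand_eq_integral (k : ℕ) (hk : 1 ≤ k) {s : ℂ} {c : ℝ} (hc1 : -s.re < c)
    (hc2 : c < -1) (m n : ℕ+) :
    (((m : ℕ) ^ k + (m : ℕ) * (n : ℕ) : ℕ) : ℂ) ^ (-s) = ((1 / (2 * Real.pi) : ℝ) : ℂ) * ∫ t : ℝ,
      Complex.Gamma (s + ((c : ℂ) + (t : ℂ) * Complex.I)) *
        Complex.Gamma (-((c : ℂ) + (t : ℂ) * Complex.I)) / Complex.Gamma s *
        (1 / ((m : ℕ) : ℂ) ^ ((k : ℂ) * s + ((k : ℂ) - 1) * ((c : ℂ) + (t : ℂ) * Complex.I)) *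
          (1 / ((n : ℕ) : ℂ) ^ (-((c : ℂ) + (t : ℂ) * Complex.I)))) := by
  have hm : (0 : ℝ) < (m : ℕ) := by exact_mod_cast m.pos
  have hn : (0 : ℝ) < (n : ℕ) := by exact_mod_cast n.pos
  have hx : (0 : ℝ) < (n : ℕ) / (m : ℕ) ^ (k - 1) := by positivity
  have hfac : (((m : ℕ) ^ k + (m : ℕ) * (n : ℕ) : ℕ) : ℂ) =
      ((((m : ℕ) ^ k : ℕ) : ℝ) : ℂ) * ((1 + (n : ℕ) / (m : ℕ) ^ (k - 1) : ℝ) : ℂ) := by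
    rw [← Complex.ofReal_mul, ← Complex.ofReal_natCast]
    congr 1
    obtain ⟨j, rfl⟩ := Nat.exists_eq_add_of_le' hk
    push_cast
    rw [pow_succ]
    field_simp
  rw [hfac, Complex.mul_cpow_ofReal_nonneg (by positivity) (by positivity),
    mellin_barnes hc1 hc2 hx, mul_left_comm, ← integral_const_mul]
  congr 1
  refine integral_congr_ae (Filter.Eventually.of_forall fun t => ?_)
  simp only
  rw [mul_left_comm, summand_factor k hk]

theorem wigert_double_sum_as_line_integral (k : ℕ) (hk : 2 ≤ k) (s : ℂ) (hs : 1 < s.re)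
    (c : ℝ) (hc1 : -s.re < c) (hc2 : c < -1) :
    MeasureTheory.Integrable (fun t : ℝ =>
      Complex.Gamma (s + ((c : ℂ) + (t : ℂ) * Complex.I)) *
        Complex.Gamma (-((c : ℂ) + (t : ℂ) * Complex.I)) / Complex.Gamma s *
        riemannZeta (-((c : ℂ) + (t : ℂ) * Complex.I)) *
        riemannZeta ((k : ℂ) * s + ((k : ℂ) - 1) * ((c : ℂ) + (t : ℂ) * Complex.I))) ∧
    ∑' p : ℕ+ × ℕ+, ((((p.1 : ℕ) ^ k + (p.1 : ℕ) * (p.2 : ℕ) : ℕ)) : ℂ) ^ (-s)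
      = ((1 / (2 * Real.pi) : ℝ) : ℂ) * ∫ t : ℝ,
          Complex.Gamma (s + ((c : ℂ) + (t : ℂ) * Complex.I)) *
            Complex.Gamma (-((c : ℂ) + (t : ℂ) * Complex.I)) / Complex.Gamma s *
            riemannZeta (-((c : ℂ) + (t : ℂ) * Complex.I)) *
            riemannZeta ((k : ℂ) * s + ((k : ℂ) - 1) * ((c : ℂ) + (t : ℂ) * Complex.I)) := by
  set G : ℝ → ℂ := fun t => Complex.Gamma (s + ((c : ℂ) + (t : ℂ) * Complex.I)) *
        Complex.Gamma (-((c : ℂ) + (t : ℂ) * Complex.I)) / Complex.Gamma s with hGdef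
  have hG : Integrable G := integrable_Gamma_mul_Gamma hc1 hc2
  have hre1 (t : ℝ) : (-((c : ℂ) + (t : ℂ) * Complex.I)).re = -c := by simp
  have hre2 (t : ℝ) : ((k : ℂ) * s + ((k : ℂ) - 1) * ((c : ℂ) + (t : ℂ) * Complex.I)).re =
      k * s.re + (k - 1) * c := by simp
  have hkR : (2 : ℝ) ≤ k := by exact_mod_cast hk
  -- `kσ + (k-1)c = σ + (k-1)(σ + c)`, and both `k - 1` and `σ + c` are positive
  have hr2 : 1 < k * s.re + (k - 1) * c := by nlinarith
  refine ⟨integrable_mul_zeta (integrable_mul_zeta hG (by fun_prop) (by linarith) hre1)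
    (by fun_prop) hr2 hre2, ?_⟩
  let F : ℕ+ × ℕ+ → ℝ → ℂ := fun p t => G t *
    (1 / ((p.1 : ℕ) : ℂ) ^ ((k : ℂ) * s + ((k : ℂ) - 1) * ((c : ℂ) + (t : ℂ) * Complex.I)) *
      (1 / ((p.2 : ℕ) : ℂ) ^ (-((c : ℂ) + (t : ℂ) * Complex.I))))
  have hnorm (p : ℕ+ × ℕ+) (t : ℝ) : ‖F p t‖ = ‖G t‖ *
      (((p.1 : ℕ) : ℝ) ^ (-(k * s.re + (k - 1) * c)) * ((p.2 : ℕ) : ℝ) ^ (-(-c))) := by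
    simp only [F]
    rw [norm_mul, norm_mul, norm_one_div_pnat_cpow, norm_one_div_pnat_cpow, hre1, hre2]
  have hFint (p : ℕ+ × ℕ+) : Integrable (F p) := by
    refine hG.mul_bdd (c := ((p.1 : ℕ) : ℝ) ^ (-(k * s.re + (k - 1) * c)) *
      ((p.2 : ℕ) : ℝ) ^ (-(-c))) ?_ (Filter.Eventually.of_forall fun t => ?_)
    · have h1 : ((p.1 : ℕ) : ℂ) ≠ 0 := by exact_mod_cast p.1.ne_zero
      have h2 : ((p.2 : ℕ) : ℂ) ≠ 0 := by exact_mod_cast p.2.ne_zero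
      refine Continuous.aestronglyMeasurable ?_
      simp_rw [one_div, ← Complex.cpow_neg]
      exact (Continuous.const_cpow (by fun_prop) (Or.inl h1)).mul
        (Continuous.const_cpow (by fun_prop) (Or.inl h2))
    · rw [norm_mul, norm_one_div_pnat_cpow, norm_one_div_pnat_cpow, hre1, hre2]
  have hsum : Summable fun p => ∫ t, ‖F p t‖ := by
    simp_rw [hnorm, integral_mul_const]
    refine Summable.mul_left _ ?_
    exact Summable.mul_of_nonneg
      (f := fun m : ℕ+ => ((m : ℕ) : ℝ) ^ (-(k * s.re + (k - 1) * c)))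
      (g := fun n : ℕ+ => ((n : ℕ) : ℝ) ^ (-(-c)))
      (summable_pnat_rpow (by linarith)) (summable_pnat_rpow (by linarith))
      (fun m => by positivity) (fun n => by positivity)
  have hmain := (hasSum_integral_of_summable_integral_norm hFint hsum).tsum_eq
  have htsum (t : ℝ) : ∑' p, F p t = G t * riemannZeta (-((c : ℂ) + (t : ℂ) * Complex.I)) *
      riemannZeta ((k : ℂ) * s + ((k : ℂ) - 1) * ((c : ℂ) + (t : ℂ) * Complex.I)) := by
    simp only [F]
    rw [tsum_mul_left, mul_assoc, mul_comm (riemannZeta _),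
      zeta_eq_tsum_pnat (by rw [hre2]; exact hr2), zeta_eq_tsum_pnat (by rw [hre1]; linarith),
      tsum_mul_tsum_of_summable_norm]
    · simp_rw [norm_one_div_pnat_cpow, hre2]
      exact summable_pnat_rpow (by linarith)
    · simp_rw [norm_one_div_pnat_cpow, hre1]
      exact summable_pnat_rpow (by linarith)
  simp_rw [htsum] at hmain
  rw [← hmain, ← tsum_mul_left]
  exact tsum_congr fun p => summand_eq_integral k (by omega) hc1 hc2 p.1 p.2
end
end

section
/- Let k ≥ 2 be an integer and set S := {1, 1/k} ∪ {(1 − (k−1)(2n+1))/k : n = 0, 1, 2, …} ⊂ ℝ ⊂ ℂ. There exists a function F : ℂ → ℂ, analytic on ℂ ∖ S, such that F(s) = ∑_{j=1}^∞ d^{(1/k)}(j) j^{−s} for all s with Re(s) > 1, such that s ↦ (s−1)² F(s) extends analytically across s = 1 with a nonzero value at 1 (a double pole), s ↦ (s − 1/k) F(s) extends analytically across s = 1/k with a nonzero value at 1/k (a simple pole), and for every a ∈ S with a ≠ 1 the function s ↦ (s − a) F(s) extends analytically across a (at most a simple pole at a). -/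
/-!
Write `n = d m`; the condition `d ^ k ≤ n` becomes `d ^ (k - 1) ≤ m`, so for `Re s > 1` the series
is `∑_d d^{-s} ∑_{m ≥ M} m^{-s}` with `M = d ^ (k - 1)` (`dirichlet_eq`). The inner sum is `1 / Γ(s)`
times the Mellin transform of `e^{-Mt} / (1 - e^{-t})`. Subtracting from `1 / (1 - e^{-t})` the first
`n + 1` terms `b_j t^{j-1}` of its expansion at `t = 0` leaves a remainder bounded by `C t^n` on all
of `(0, ∞)` (`toddRem_bound`), whose Mellin transform against `e^{-Mt}` is holomorphic for
`Re s > -n` and `O(M^{-Re s - n})` there (`remKer_norm_le`). The subtracted terms contribute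
`b_j Γ(s + j - 1) / Γ(s) ∑_d d^{-s} M^{-(s + j - 1)}`, that is
`b_j (Γ(s + j - 1) / Γ(s)) ζ(ks + (k - 1)(j - 1))` (`mainTerm`). The sum of these terms and the
remainder, `approx k n`, makes sense on `Re (ks + (k - 1)n) > 1`; these functions agree on overlaps
(`remSum_succ`) and glue to the continuation `wigertCont`.

The poles are then read off: the `j`-th main term can only be singular where its zeta factor is, at
`(1 - (k - 1)(j - 1)) / k` (`poleAt`). For `j = 0` this is `1`, where the factor `1 / (s - 1)` makes
the pole double; for `j = 1` it is `1 / k`, with residue `b_1 / k = 1 / (2k)`; and `b_j = 0` for odd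
`j ≥ 3`, because `t / (1 - e^{-t}) - t / 2` is even. The points `poleAt k j` are pairwise distinct,
so no cancellation occurs.
-/

noncomputable section

/-- The set of poles of the meromorphic continuation of `F_k`:
`{1, 1/k} ∪ {(1 − (k−1)(2n+1))/k : n ∈ ℕ}`. -/
def polesSet (k : ℕ) : Set ℂ :=
  {1, 1 / (k : ℂ)} ∪ {x : ℂ | ∃ n : ℕ, x = (1 - ((k : ℂ) - 1) * (2 * (n : ℂ) + 1)) / (k : ℂ)}
open Filter Topology Set

/-! ### The Taylor expansion of `t / (1 - e^{-t})` -/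

/-- The function `t ↦ t / (1 - e^{-t})`, extended analytically by `1` at `t = 0`. -/
def expQuot (t : ℝ) : ℝ := (dslope (fun u : ℝ => 1 - Real.exp (-u)) 0 t)⁻¹

/-- The Taylor coefficients at `0` of `t / (1 - e^{-t})` (that is, `B_j / j!` with `B_1 = 1/2`). -/
def todd (j : ℕ) : ℝ := iteratedDeriv j expQuot 0 / (j.factorial : ℝ)

lemma expQuot_of_ne {t : ℝ} (ht : t ≠ 0) : expQuot t = t / (1 - Real.exp (-t)) := by
  simp [expQuot, dslope_of_ne _ ht, slope_def_field]

lemma dslope_exp_zero : dslope (fun u : ℝ => 1 - Real.exp (-u)) 0 0 = 1 := by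
  rw [dslope_same]
  have h : HasDerivAt (fun u : ℝ => 1 - Real.exp (-u)) (-(Real.exp (-0) * (-1))) 0 :=
    ((hasDerivAt_neg (0 : ℝ)).exp).const_sub 1
  simpa using h.deriv

lemma expQuot_zero : expQuot 0 = 1 := by
  rw [expQuot, dslope_exp_zero, inv_one]

lemma analyticAt_expQuot : AnalyticAt ℝ expQuot 0 := by
  have h1 : AnalyticAt ℝ (fun u : ℝ => 1 - Real.exp (-u)) 0 := by fun_prop
  obtain ⟨p, hp⟩ := h1
  exact AnalyticAt.inv ⟨_, hp.has_fpower_series_dslope_fslope⟩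
    (by rw [dslope_exp_zero]; exact one_ne_zero)

/-- The functional equation which makes all odd Taylor coefficients but the first vanish. -/
lemma expQuot_neg (t : ℝ) : expQuot (-t) = expQuot t - t := by
  rcases eq_or_ne t 0 with rfl | ht
  · simp
  rw [expQuot_of_ne ht, expQuot_of_ne (neg_ne_zero.mpr ht), neg_neg]
  have h1 : 1 - Real.exp t ≠ 0 := by
    rw [sub_ne_zero]; intro h; exact ht (Real.exp_eq_one_iff t |>.1 h.symm)
  have h2 : 1 - Real.exp (-t) ≠ 0 := by
    rw [sub_ne_zero]; intro h
    exact ht (neg_eq_zero.1 (Real.exp_eq_one_iff (-t) |>.1 h.symm))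
  have h3 : Real.exp t * Real.exp (-t) = 1 := by rw [← Real.exp_add]; simp
  field_simp
  linear_combination h3

lemma todd_zero : todd 0 = 1 := by simp [todd, expQuot_zero]

lemma todd_parity (n : ℕ) :
    (-1 : ℝ) ^ n * iteratedDeriv n expQuot 0 =
      iteratedDeriv n expQuot 0 - (if n = 1 then 1 else 0) := by
  have h1 := iteratedDeriv_comp_neg n expQuot 0
  rw [funext expQuot_neg] at h1
  have h2 := iteratedDeriv_fun_sub (n := n) (x := (0 : ℝ)) (f := expQuot) (g := fun t => t)
    (analyticAt_expQuot.contDiffAt) contDiffAt_id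
  rw [h2, iteratedDeriv_fun_id] at h1
  simp only [neg_zero, smul_eq_mul] at h1
  rw [← h1]
  congr 1
  split_ifs <;> simp_all

lemma todd_one : todd 1 = 1 / 2 := by
  have := todd_parity 1
  simp only [todd, Nat.factorial_one, Nat.cast_one, div_one]
  simp only [if_true, pow_one] at this
  linarith

lemma todd_odd (n : ℕ) : todd (2 * n + 3) = 0 := by
  have := todd_parity (2 * n + 3)
  rw [if_neg (by omega), Odd.neg_one_pow ⟨n + 1, by ring⟩] at this
  rw [todd, div_eq_zero_iff]; left; linarith

/-- Taylor's theorem near `0`, combined with the linear growth of `t / (1 - e^{-t})` at infinity. -/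
lemma todd_bound (N : ℕ) (hN : 1 ≤ N) : ∃ C : ℝ, 0 ≤ C ∧ ∀ t : ℝ, 0 < t →
    |t / (1 - Real.exp (-t)) - ∑ j ∈ Finset.range N, todd j * t ^ j| ≤ C * t ^ N := by
  have h := analyticAt_expQuot.hasFPowerSeriesAt.isBigO_sub_partialSum_pow N
  obtain ⟨C₁, hC₁⟩ := h.bound
  obtain ⟨δ, hδ, hball⟩ := Metric.eventually_nhds_iff.1 hC₁
  set C₂ : ℝ := (1 / (1 - Real.exp (-δ))) * δ ^ 1 / δ ^ N +
    ∑ j ∈ Finset.range N, |todd j| * (δ ^ j / δ ^ N)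
  have hpow : ∀ j ≤ N, ∀ t, δ ≤ t → t ^ j ≤ δ ^ j / δ ^ N * t ^ N := by
    intro j hj t ht
    rw [div_mul_eq_mul_div, le_div_iff₀ (by positivity)]
    obtain ⟨m, rfl⟩ := Nat.exists_eq_add_of_le hj
    have := pow_le_pow_left₀ hδ.le ht m
    have ht0 : 0 < t := hδ.trans_le ht
    calc t ^ j * δ ^ (j + m) = (t ^ j * δ ^ j) * δ ^ m := by ring
      _ ≤ (t ^ j * δ ^ j) * t ^ m := by gcongr
      _ = _ := by ring
  refine ⟨max C₁ (max C₂ 0), by simp, fun t ht => ?_⟩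
  rcases lt_or_ge t δ with htδ | htδ
  · have := hball (y := t) (by simpa [abs_of_pos ht] using htδ)
    simp only [zero_add, FormalMultilinearSeries.partialSum,
      FormalMultilinearSeries.ofScalars_apply_eq, norm_pow, Real.norm_eq_abs,
      abs_of_pos ht, expQuot_of_ne ht.ne', smul_eq_mul] at this
    refine (this.trans' (le_of_eq ?_)).trans ?_
    · rfl
    · gcongr; exact le_max_left _ _
  · have hδ1 : Real.exp (-δ) < 1 := by simpa using hδ
    have hexp : Real.exp (-t) ≤ Real.exp (-δ) := by simpa using htδ
    have h1 : |t / (1 - Real.exp (-t))| ≤ (1 / (1 - Real.exp (-δ))) * t ^ 1 := by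
      rw [abs_of_nonneg (div_nonneg ht.le (by linarith)), div_eq_inv_mul, pow_one, one_div]
      gcongr
    have hnn : 0 ≤ 1 / (1 - Real.exp (-δ)) := by
      apply one_div_nonneg.2; linarith
    calc _ ≤ |t / (1 - Real.exp (-t))| + |∑ j ∈ Finset.range N, todd j * t ^ j| := abs_sub _ _
      _ ≤ (1 / (1 - Real.exp (-δ))) * t ^ 1 + ∑ j ∈ Finset.range N, |todd j| * t ^ j := by
          gcongr
          refine (Finset.abs_sum_le_sum_abs _ _).trans (Finset.sum_le_sum fun j _ => ?_)
          rw [abs_mul, abs_of_pos (pow_pos ht j)]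
      _ ≤ (1 / (1 - Real.exp (-δ))) * (δ ^ 1 / δ ^ N * t ^ N) +
          ∑ j ∈ Finset.range N, |todd j| * (δ ^ j / δ ^ N * t ^ N) := by
          gcongr with j hj
          · exact hpow 1 hN t htδ
          · exact hpow j (Finset.mem_range.1 hj).le t htδ
      _ = C₂ * t ^ N := by
          simp only [C₂, add_mul, Finset.sum_mul]
          congr 1
          · ring
          · exact Finset.sum_congr rfl fun j _ => by ring
      _ ≤ _ := by gcongr; simp

/-- The remainder `1 / (1 - e^{-t}) - ∑_{j < N} b_j t^{j-1}` of the expansion at `t = 0`, with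
`b_j` the coefficients `todd j`. -/
def toddRem (N : ℕ) (t : ℝ) : ℝ :=
  1 / (1 - Real.exp (-t)) - ∑ j ∈ Finset.range N, todd j * t ^ ((j : ℤ) - 1)

lemma toddRem_succ (N : ℕ) (t : ℝ) :
    toddRem N t = toddRem (N + 1) t + todd N * t ^ ((N : ℤ) - 1) := by
  simp only [toddRem, Finset.sum_range_succ]; ring

lemma toddRem_bound (n : ℕ) : ∃ C : ℝ, 0 ≤ C ∧ ∀ t : ℝ, 0 < t →
    |toddRem (n + 1) t| ≤ C * t ^ n := by
  obtain ⟨C, hC0, hC⟩ := todd_bound (n + 1) (by omega)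
  refine ⟨C, hC0, fun t ht => ?_⟩
  have h1 : t * toddRem (n + 1) t =
      t / (1 - Real.exp (-t)) - ∑ j ∈ Finset.range (n + 1), todd j * t ^ j := by
    rw [toddRem, mul_sub, Finset.mul_sum]
    congr 1
    · ring
    · refine Finset.sum_congr rfl fun j _ => ?_
      rw [zpow_sub_one₀ ht.ne', zpow_natCast]
      field_simp
  have h2 := hC t ht
  rw [← h1, abs_mul, abs_of_pos ht, pow_succ, ← mul_assoc, mul_comm] at h2
  exact le_of_mul_le_mul_right h2 ht

lemma one_sub_exp_neg_pos {t : ℝ} (ht : 0 < t) : 0 < 1 - Real.exp (-t) := by simpa using ht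

lemma continuousOn_toddRem (N : ℕ) : ContinuousOn (toddRem N) (Ioi 0) := by
  unfold toddRem
  refine ContinuousOn.sub (ContinuousOn.div (by fun_prop) (by fun_prop)
    fun t ht => (one_sub_exp_neg_pos ht).ne') ?_
  refine continuousOn_finsetSum _ fun j _ => ContinuousOn.mul (by fun_prop) ?_
  exact fun t ht => (continuousAt_zpow₀ t _ (Or.inl (ne_of_gt ht))).continuousWithinAt

/-! ### Mellin transforms of the remainder and of the subtracted terms -/

/-- The function `t ↦ e^{-Mt} toddRem N t` whose Mellin transform is taken. -/
def remKer (M : ℝ) (N : ℕ) (t : ℝ) : ℂ := ((Real.exp (-M * t) * toddRem N t : ℝ) : ℂ)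

lemma remKer_hyps (M : ℝ) (hM : 0 < M) (n : ℕ) :
    MeasureTheory.LocallyIntegrableOn (remKer M (n + 1)) (Ioi 0) ∧
    (remKer M (n + 1) =O[atTop] fun t => Real.exp (-(M / 2) * t)) ∧
    (remKer M (n + 1) =O[𝓝[>] 0] fun t : ℝ => t ^ (-(-(n : ℝ)))) := by
  obtain ⟨C, hC0, hC⟩ := toddRem_bound n
  have hnorm : ∀ t : ℝ, 0 < t → ‖remKer M (n + 1) t‖ ≤ C * (Real.exp (-M * t) * t ^ n) := by
    intro t ht
    rw [remKer, Complex.norm_real, norm_mul, Real.norm_eq_abs, Real.norm_eq_abs,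
      abs_of_pos (Real.exp_pos _)]
    calc _ ≤ Real.exp (-M * t) * (C * t ^ n) := by gcongr; exact hC t ht
      _ = _ := by ring
  refine ⟨?_, ?_, ?_⟩
  · refine ContinuousOn.locallyIntegrableOn ?_ measurableSet_Ioi
    refine Complex.continuous_ofReal.comp_continuousOn ?_
    exact ContinuousOn.mul (by fun_prop) (continuousOn_toddRem _)
  · have h1 : remKer M (n + 1) =O[atTop] fun t : ℝ => Real.exp (-M * t) * t ^ n := by
      refine Asymptotics.IsBigO.of_bound C ?_
      filter_upwards [eventually_gt_atTop 0] with t ht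
      rw [Real.norm_of_nonneg (by positivity)]
      exact hnorm t ht
    refine h1.trans ?_
    have h2 := (isLittleO_pow_exp_pos_mul_atTop n (half_pos hM)).isBigO
    have h3 := (Asymptotics.isBigO_refl (fun t : ℝ => Real.exp (-M * t)) atTop).mul h2
    refine h3.congr_right fun t => ?_
    rw [← Real.exp_add]; congr 1; ring
  · refine Asymptotics.IsBigO.of_bound C ?_
    filter_upwards [self_mem_nhdsWithin] with t ht
    have ht : 0 < t := ht
    rw [neg_neg, Real.rpow_natCast, Real.norm_of_nonneg (by positivity)]
    refine (hnorm t ht).trans ?_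
    gcongr
    have : Real.exp (-M * t) ≤ 1 := Real.exp_le_one_iff.2 (by nlinarith)
    exact mul_le_of_le_one_left (by positivity) this

lemma remKer_convergent {M : ℝ} (hM : 0 < M) (n : ℕ) {s : ℂ} (hs : 0 < s.re + n) :
    MellinConvergent (remKer M (n + 1)) s := by
  obtain ⟨h1, h2, h3⟩ := remKer_hyps M hM n
  exact mellinConvergent_of_isBigO_rpow_exp (half_pos hM) h1 h2 h3 (by linarith)

lemma remKer_differentiableAt {M : ℝ} (hM : 0 < M) (n : ℕ) {s : ℂ} (hs : 0 < s.re + n) :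
    DifferentiableAt ℂ (mellin (remKer M (n + 1))) s := by
  obtain ⟨h1, h2, h3⟩ := remKer_hyps M hM n
  exact mellin_differentiableAt_of_isBigO_rpow_exp (half_pos hM) h1 h2 h3 (by linarith)

lemma remKer_norm_le (n : ℕ) : ∃ C : ℝ, 0 ≤ C ∧ ∀ M : ℝ, 0 < M → ∀ s : ℂ, 0 < s.re + n →
    ‖mellin (remKer M (n + 1)) s‖ ≤ C * Real.Gamma (s.re + n) * M ^ (-(s.re + n)) := by
  obtain ⟨C, hC0, hC⟩ := toddRem_bound n
  refine ⟨C, hC0, fun M hM s hs => ?_⟩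
  have hint := Real.integral_rpow_mul_exp_neg_mul_Ioi hs hM
  have hpos : 0 < (1 / M) ^ (s.re + n) * Real.Gamma (s.re + n) :=
    mul_pos (by positivity) (Real.Gamma_pos_of_pos hs)
  have hI : MeasureTheory.IntegrableOn
      (fun t : ℝ => t ^ (s.re + n - 1) * Real.exp (-(M * t))) (Ioi 0) := by
    by_contra h
    rw [MeasureTheory.integral_undef h] at hint
    exact hpos.ne hint
  calc ‖mellin (remKer M (n + 1)) s‖
      ≤ ∫ t in Ioi (0 : ℝ), C * (t ^ (s.re + n - 1) * Real.exp (-(M * t))) := by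
        refine MeasureTheory.norm_integral_le_of_norm_le (hI.const_mul C) ?_
        refine (MeasureTheory.ae_restrict_iff' measurableSet_Ioi).2 (Eventually.of_forall ?_)
        intro t ht
        have ht : 0 < t := ht
        rw [norm_smul, Complex.norm_cpow_eq_rpow_re_of_pos ht, remKer, Complex.norm_real, norm_mul,
          Real.norm_eq_abs, Real.norm_eq_abs, abs_of_pos (Real.exp_pos _),
          add_sub_right_comm, Real.rpow_add ht, Real.rpow_natCast]
        simp only [Complex.sub_re, Complex.one_re]
        calc _ ≤ t ^ (s.re - 1) * (Real.exp (-M * t) * (C * t ^ n)) := by gcongr; exact hC t ht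
          _ = _ := by rw [neg_mul]; ring
    _ = C * Real.Gamma (s.re + n) * M ^ (-(s.re + n)) := by
        rw [MeasureTheory.integral_const_mul, hint, one_div, Real.inv_rpow hM.le,
          ← Real.rpow_neg hM.le]
        ring

lemma hasMellin_pow (j : ℕ) {M : ℝ} (hM : 0 < M) {s : ℂ} (hs : 0 < s.re + j - 1) :
    HasMellin (fun t : ℝ => ((Real.exp (-M * t) * t ^ ((j : ℤ) - 1) : ℝ) : ℂ)) s
      (Complex.Gamma (s + j - 1) * (M : ℂ) ^ (-(s + j - 1))) := by
  have hs' : 0 < (s + j - 1).re := by simpa using hs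
  have hexp : HasMellin (fun t : ℝ => ((Real.exp (-M * t) : ℝ) : ℂ)) (s + ((j : ℂ) - 1))
      (Complex.Gamma (s + j - 1) * (M : ℂ) ^ (-(s + j - 1))) := by
    rw [← add_sub_assoc]
    constructor
    · refine mellinConvergent_of_isBigO_rpow_exp (a := M) (b := 0) hM ?_ ?_ ?_ hs'
      · refine ContinuousOn.locallyIntegrableOn ?_ measurableSet_Ioi
        fun_prop
      · refine Asymptotics.IsBigO.of_bound 1 (Eventually.of_forall fun t => ?_)
        rw [Complex.norm_real, one_mul]
      · refine Asymptotics.IsBigO.of_bound 1 ?_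
        filter_upwards [self_mem_nhdsWithin] with t ht
        have ht : 0 < t := ht
        rw [Complex.norm_real, Real.norm_of_nonneg (Real.exp_pos _).le]
        simpa using (by positivity : 0 ≤ M * t)
    · have := Complex.integral_cpow_mul_exp_neg_mul_Ioi hs' hM
      rw [one_div, Complex.inv_cpow _ _ (by
        rw [Complex.arg_ofReal_of_nonneg hM.le]; exact Real.pi_pos.ne), ← Complex.cpow_neg,
        mul_comm] at this
      rw [← this, mellin]
      simp
  have hcongr : ∀ t ∈ Ioi (0 : ℝ),
      (t : ℂ) ^ ((j : ℂ) - 1) • ((Real.exp (-M * t) : ℝ) : ℂ) =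
        ((Real.exp (-M * t) * t ^ ((j : ℤ) - 1) : ℝ) : ℂ) := by
    intro t ht
    have : (j : ℂ) - 1 = (((j : ℤ) - 1 : ℤ) : ℂ) := by push_cast; ring
    rw [this, Complex.cpow_intCast, smul_eq_mul, mul_comm]
    push_cast; ring
  constructor
  · refine (MeasureTheory.integrableOn_congr_fun (fun t ht => ?_) measurableSet_Ioi).1
      (MellinConvergent.cpow_smul.2 hexp.1)
    simp only [hcongr t ht]
  · rw [← hexp.2, ← mellin_cpow_smul]
    refine MeasureTheory.setIntegral_congr_fun measurableSet_Ioi fun t ht => ?_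
    simp only [hcongr t ht]

lemma mellin_remKer_succ {M : ℝ} (hM : 0 < M) (n : ℕ) {s : ℂ} (hs : 0 < s.re + n) :
    mellin (remKer M (n + 1)) s = mellin (remKer M (n + 2)) s +
      todd (n + 1) * (Complex.Gamma (s + n) * (M : ℂ) ^ (-(s + n))) := by
  have h1 := remKer_convergent hM (n + 1) (s := s) (by push_cast; linarith)
  have h2 := hasMellin_pow (n + 1) hM (s := s) (by push_cast; linarith)
  have h3 := hasMellin_const_smul h2.1 ((todd (n + 1) : ℝ) : ℂ)
  have h4 := (hasMellin_add h1 h3.1).2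
  have e : s + ((n + 1 : ℕ) : ℂ) - 1 = s + n := by push_cast; ring
  rw [h3.2, h2.2, e, smul_eq_mul] at h4
  rw [← h4]
  congr 1
  ext t
  simp only [remKer, toddRem_succ (n + 1) t, smul_eq_mul]
  push_cast; ring

/-- For `Re s > 1` the Mellin transform of `e^{-Mt} / (1 - e^{-t})` is `Γ(s) ∑_{m ≥ M} m^{-s}`. -/
lemma hasSum_mellin_remKer_zero {M : ℕ} (hM : 0 < M) {s : ℂ} (hs : 1 < s.re) :
    HasSum (fun i : ℕ => Complex.Gamma s * ((M + i : ℕ) : ℂ) ^ (-s))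
      (mellin (remKer M 0) s) := by
  have hsum : Summable fun i : ℕ => ‖(1 : ℂ)‖ / (((M + i : ℕ) : ℝ)) ^ s.re := by
    simp only [norm_one]
    have := (Real.summable_one_div_nat_rpow (p := s.re)).2 hs
    simpa only [add_comm M] using (summable_nat_add_iff M).2 this
  have h := hasSum_mellin (a := fun _ : ℕ => (1 : ℂ)) (p := fun i : ℕ => ((M + i : ℕ) : ℝ))
    (F := remKer M 0) (s := s) (fun i => Or.inr (by positivity)) (by linarith) ?_ hsum
  · refine h.congr_fun ?_
    intro i
    rw [Complex.cpow_neg, mul_one, div_eq_mul_inv]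
    simp
  · intro t ht
    have ht : 0 < t := ht
    have hg := (hasSum_geometric_of_lt_one (Real.exp_pos (-t)).le
      (by simpa using ht : Real.exp (-t) < 1)).mul_left (Real.exp (-(M : ℝ) * t))
    have hg' := Complex.hasSum_ofReal.2 hg
    have e : ((Real.exp (-(M : ℝ) * t) * (1 - Real.exp (-t))⁻¹ : ℝ) : ℂ) = remKer M 0 t := by
      simp [remKer, toddRem]
    rw [e] at hg'
    refine hg'.congr_fun ?_
    intro i
    rw [one_mul, ← Real.exp_nat_mul, ← Real.exp_add]
    congr 2
    push_cast; ring

lemma mellin_remKer_zero {M : ℝ} (hM : 0 < M) {s : ℂ} (hs : 1 < s.re) :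
    mellin (remKer M 0) s = mellin (remKer M 1) s +
      Complex.Gamma (s - 1) * (M : ℂ) ^ (-(s - 1)) := by
  have h1 := remKer_convergent hM 0 (s := s) (by push_cast; linarith)
  have h2 := hasMellin_pow 0 hM (s := s) (by push_cast; linarith)
  have h4 := (hasMellin_add h1 h2.1).2
  rw [h2.2] at h4
  simp only [Nat.cast_zero, add_zero, zero_add] at h4
  rw [← h4]
  congr 1
  ext t
  simp only [remKer, toddRem_succ 0 t, todd_zero]
  push_cast; ring

/-! ### Summation over the divisor -/

/-- The quotient `Γ(s + j - 1) / Γ(s)`: it is `1 / (s - 1)` for `j = 0` and the polynomial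
`s (s + 1) ⋯ (s + j - 2)` for `j ≥ 1`. -/
def gammaQuot : ℕ → ℂ → ℂ
  | 0, s => 1 / (s - 1)
  | j + 1, s => ∏ i ∈ Finset.range j, (s + i)

lemma inv_Gamma_eq_prod (j : ℕ) (s : ℂ) :
    (Complex.Gamma s)⁻¹ = (∏ i ∈ Finset.range j, (s + i)) * (Complex.Gamma (s + j))⁻¹ := by
  induction j with
  | zero => simp
  | succ j ih =>
    have h := Complex.one_div_Gamma_eq_self_mul_one_div_Gamma_add_one (s + j)
    rw [ih, h, Finset.prod_range_succ, mul_assoc]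
    push_cast
    rw [add_assoc s]

lemma inv_Gamma_mul_Gamma (j : ℕ) {s : ℂ} (hs : 0 < s.re + j - 1) :
    (Complex.Gamma s)⁻¹ * Complex.Gamma (s + j - 1) = gammaQuot j s := by
  have hs' : 0 < (s + j - 1).re := by simpa using hs
  have hG := Complex.Gamma_ne_zero_of_re_pos hs'
  cases j with
  | zero =>
    simp only [Nat.cast_zero, add_zero] at hs' hG ⊢
    have h1 : s - 1 ≠ 0 := by
      intro h; rw [h] at hs'; simp at hs'
    have := Complex.Gamma_add_one (s - 1) h1
    rw [sub_add_cancel] at this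
    rw [this, gammaQuot]
    field_simp
  | succ j =>
    have e : s + ((j + 1 : ℕ) : ℂ) - 1 = s + j := by push_cast; ring
    rw [e] at hG ⊢
    rw [inv_Gamma_eq_prod j s, mul_assoc, inv_mul_cancel₀ hG, mul_one, gammaQuot]

lemma pow_cpow_of_pos {x : ℝ} (hx : 0 < x) (n : ℕ) (w : ℂ) :
    ((x ^ n : ℝ) : ℂ) ^ w = (x : ℂ) ^ ((n : ℂ) * w) := by
  rw [Complex.cpow_def_of_ne_zero (by exact_mod_cast (pow_pos hx n).ne'),
    Complex.cpow_def_of_ne_zero (by exact_mod_cast hx.ne'), ← Complex.ofReal_log hx.le,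
    ← Complex.ofReal_log (pow_pos hx n).le, Real.log_pow]
  congr 1
  push_cast; ring

lemma hasSum_zeta_term (k : ℕ) (hk : 2 ≤ k) (j : ℕ) {s : ℂ}
    (hs : 1 < (k : ℝ) * s.re + ((k : ℝ) - 1) * ((j : ℝ) - 1)) :
    HasSum (fun d : ℕ => ((d : ℂ) + 1) ^ (-s) *
        (((((d : ℝ) + 1) ^ (k - 1) : ℝ)) : ℂ) ^ (-(s + j - 1)))
      (riemannZeta (k * s + ((k : ℂ) - 1) * ((j : ℂ) - 1))) := by
  set w : ℂ := k * s + ((k : ℂ) - 1) * ((j : ℂ) - 1) with hw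
  have hre : 1 < w.re := by
    have : w.re = (k : ℝ) * s.re + ((k : ℝ) - 1) * ((j : ℝ) - 1) := by simp [hw]
    linarith
  have hsum : Summable fun n : ℕ => 1 / ((n : ℂ) + 1) ^ w := by
    have := (summable_nat_add_iff 1).2 (Complex.summable_one_div_nat_cpow.2 hre)
    simpa using this
  have h := hsum.hasSum
  rw [← zeta_eq_tsum_one_div_nat_add_one_cpow hre] at h
  refine h.congr_fun ?_
  intro d
  have hd : (0 : ℝ) < (d : ℝ) + 1 := by positivity
  have hd' : ((d : ℂ) + 1) ≠ 0 := by exact_mod_cast hd.ne'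
  rw [pow_cpow_of_pos hd]
  push_cast [Nat.cast_sub (by omega : 1 ≤ k)]
  rw [← Complex.cpow_add _ _ hd', one_div, ← Complex.cpow_neg]
  congr 1
  rw [hw]; ring

/-! ### The approximations and their compatibility -/

/-- The `j`-th term `b_j Γ(s + j - 1) / Γ(s) ζ(ks + (k - 1)(j - 1))` of the expansion of the
continued Dirichlet series. -/
def mainTerm (k j : ℕ) (s : ℂ) : ℂ :=
  todd j * gammaQuot j s * riemannZeta (k * s + ((k : ℂ) - 1) * ((j : ℂ) - 1))

/-- The contribution of the divisor `d + 1` to the remainder after `n + 1` main terms. -/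
def remTerm (k n d : ℕ) (s : ℂ) : ℂ :=
  ((d : ℂ) + 1) ^ (-s) * mellin (remKer (((d : ℝ) + 1) ^ (k - 1)) (n + 1)) s

/-- The remainder after `n + 1` main terms. -/
def remSum (k n : ℕ) (s : ℂ) : ℂ := (Complex.Gamma s)⁻¹ * ∑' d : ℕ, remTerm k n d s

/-- The `n`-th approximation to the continuation, meaningful on `halfPlane k n`. -/
def approx (k n : ℕ) (s : ℂ) : ℂ := ∑ j ∈ Finset.range (n + 1), mainTerm k j s + remSum k n s

/-- The half plane `Re (ks + (k - 1)n) > 1` on which the remainder series converges. -/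
def halfPlane (k n : ℕ) : Set ℂ := {s | 1 < (k : ℝ) * s.re + ((k : ℝ) - 1) * n}

lemma isOpen_halfPlane (k n : ℕ) : IsOpen (halfPlane k n) :=
  isOpen_lt continuous_const (by fun_prop)

lemma halfPlane_mono (k : ℕ) (hk : 2 ≤ k) {m n : ℕ} (h : m ≤ n) :
    halfPlane k m ⊆ halfPlane k n := by
  intro s hs
  have hk' : (2 : ℝ) ≤ k := by exact_mod_cast hk
  have h' : (m : ℝ) ≤ n := by exact_mod_cast h
  simp only [halfPlane, mem_ofPred_eq] at hs ⊢
  nlinarith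

lemma exists_mem_halfPlane (k : ℕ) (hk : 2 ≤ k) (m : ℕ) (s : ℂ) :
    ∃ n, m ≤ n ∧ s ∈ halfPlane k n := by
  have hk' : (2 : ℝ) ≤ k := by exact_mod_cast hk
  obtain ⟨n, hn⟩ := exists_nat_gt (1 - (k : ℝ) * s.re)
  refine ⟨max m n, le_max_left _ _, halfPlane_mono k hk (le_max_right m n) ?_⟩
  simp only [halfPlane, mem_ofPred_eq]
  have : (0 : ℝ) ≤ n := n.cast_nonneg
  nlinarith

lemma re_add_pos_of_mem {k : ℕ} (hk : 2 ≤ k) {n : ℕ} {s : ℂ} (hs : s ∈ halfPlane k n) :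
    0 < s.re + n := by
  have hk' : (2 : ℝ) ≤ k := by exact_mod_cast hk
  simp only [halfPlane, mem_ofPred_eq] at hs
  have : (0 : ℝ) ≤ n := n.cast_nonneg
  by_contra! h
  nlinarith

lemma remTerm_norm_le (k : ℕ) (hk : 2 ≤ k) (n : ℕ) : ∃ C : ℝ, 0 ≤ C ∧ ∀ (d : ℕ),
    ∀ s ∈ halfPlane k n, ‖remTerm k n d s‖ ≤ C * Real.Gamma (s.re + n) *
      ((d : ℝ) + 1) ^ (-((k : ℝ) * s.re + ((k : ℝ) - 1) * n)) := by
  obtain ⟨C, hC0, hC⟩ := remKer_norm_le n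
  refine ⟨C, hC0, fun d s hs => ?_⟩
  have hd : (0 : ℝ) < (d : ℝ) + 1 := by positivity
  have h1 := hC (((d : ℝ) + 1) ^ (k - 1)) (by positivity) s (re_add_pos_of_mem hk hs)
  have e : ((d : ℂ) + 1) = (((d : ℝ) + 1 : ℝ) : ℂ) := by push_cast; ring
  rw [remTerm, norm_mul, e, Complex.norm_cpow_eq_rpow_re_of_pos hd]
  refine (mul_le_mul_of_nonneg_left h1 (by positivity)).trans (le_of_eq ?_)
  rw [← Real.rpow_natCast_mul hd.le, mul_left_comm, ← Real.rpow_add hd]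
  congr 2
  push_cast [Nat.cast_sub (by omega : 1 ≤ k), Complex.neg_re]
  ring

lemma summable_shift_rpow {p : ℝ} (hp : 1 < p) :
    Summable fun d : ℕ => ((d : ℝ) + 1) ^ (-p) := by
  have := (summable_nat_add_iff 1).2 (Real.summable_nat_rpow.2 (neg_lt_neg hp))
  simpa using this

lemma summable_remTerm (k : ℕ) (hk : 2 ≤ k) (n : ℕ) {s : ℂ} (hs : s ∈ halfPlane k n) :
    Summable fun d => remTerm k n d s := by
  obtain ⟨C, hC0, hC⟩ := remTerm_norm_le k hk n
  exact Summable.of_norm_bounded ((summable_shift_rpow hs).mul_left _) fun d => hC d s hs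

lemma analyticAt_remSum (k : ℕ) (hk : 2 ≤ k) (n : ℕ) {s : ℂ} (hs : s ∈ halfPlane k n) :
    AnalyticAt ℂ (remSum k n) s := by
  obtain ⟨C, hC0, hC⟩ := remTerm_norm_le k hk n
  -- Near `s` the Gamma factor is bounded and the exponent stays above some `p > 1`.
  obtain ⟨p, hp1, hp⟩ := exists_between (show 1 < (k : ℝ) * s.re + ((k : ℝ) - 1) * n from hs)
  have hpos := re_add_pos_of_mem hk hs
  have hΓ : ContinuousAt (fun z : ℂ => Real.Gamma (z.re + n)) s := by
    refine ContinuousAt.comp (g := Real.Gamma) (f := fun z : ℂ => z.re + n) ?_ (by fun_prop)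
    refine (Real.differentiableAt_Gamma fun m hm => ?_).continuousAt
    have : (0 : ℝ) ≤ m := m.cast_nonneg
    linarith
  have hev : ∀ᶠ z in 𝓝 s, z ∈ halfPlane k n ∧ Real.Gamma (z.re + n) < Real.Gamma (s.re + n) + 1 ∧
      p < (k : ℝ) * z.re + ((k : ℝ) - 1) * n := by
    refine ((isOpen_halfPlane k n).eventually_mem hs).and
      ((hΓ.eventually (gt_mem_nhds (lt_add_one _))).and ?_)
    exact (isOpen_lt continuous_const
      (by fun_prop : Continuous fun z : ℂ => (k : ℝ) * z.re + ((k : ℝ) - 1) * n)).mem_nhds hp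
  obtain ⟨U, hU, hUo, hsU⟩ := eventually_nhds_iff.1 hev
  have hdiff : DifferentiableOn ℂ (fun z => ∑' d : ℕ, remTerm k n d z) U := by
    refine Complex.differentiableOn_tsum_of_summable_norm
      (u := fun d : ℕ => C * (Real.Gamma (s.re + n) + 1) * ((d : ℝ) + 1) ^ (-p))
      ((summable_shift_rpow hp1).mul_left _) (fun d z hz => ?_) hUo (fun d z hz => ?_)
    · have hd : ((d : ℂ) + 1) ≠ 0 := by exact_mod_cast d.succ_ne_zero
      refine DifferentiableAt.differentiableWithinAt (DifferentiableAt.mul ?_ ?_)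
      · exact (differentiableAt_id.neg).const_cpow (Or.inl hd)
      · exact remKer_differentiableAt (by positivity) n (re_add_pos_of_mem hk (hU z hz).1)
    · obtain ⟨h1, h2, h3⟩ := hU z hz
      refine (hC d z h1).trans ?_
      have := Real.Gamma_pos_of_pos hpos
      gcongr
      linarith [(d.cast_nonneg : (0 : ℝ) ≤ d)]
  have hG : DifferentiableOn ℂ (fun z => (Complex.Gamma z)⁻¹) U :=
    Complex.differentiable_one_div_Gamma.differentiableOn
  exact (hG.mul hdiff).analyticAt (hUo.mem_nhds hsU)

lemma remSum_succ (k : ℕ) (hk : 2 ≤ k) (n : ℕ) {s : ℂ} (hs : s ∈ halfPlane k n) :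
    remSum k n s = mainTerm k (n + 1) s + remSum k (n + 1) s := by
  have hpos := re_add_pos_of_mem hk hs
  have hs1 := halfPlane_mono k hk n.le_succ hs
  have hz := hasSum_zeta_term k hk (n + 1) (s := s) (by
    have : (1 : ℝ) < (k : ℝ) * s.re + ((k : ℝ) - 1) * n := hs
    push_cast; simpa using this)
  have hterm : ∀ d : ℕ, remTerm k n d s = remTerm k (n + 1) d s +
      todd (n + 1) * Complex.Gamma (s + n) * (((d : ℂ) + 1) ^ (-s) *
        (((((d : ℝ) + 1) ^ (k - 1) : ℝ)) : ℂ) ^ (-(s + (n + 1 : ℕ) - 1))) := by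
    intro d
    have e : s + ((n + 1 : ℕ) : ℂ) - 1 = s + n := by push_cast; ring
    rw [remTerm, mellin_remKer_succ (by positivity) n hpos, remTerm, e]
    ring
  have htsum : ∑' d, remTerm k n d s = ∑' d, remTerm k (n + 1) d s +
      todd (n + 1) * Complex.Gamma (s + n) *
        riemannZeta (k * s + ((k : ℂ) - 1) * (((n + 1 : ℕ) : ℂ) - 1)) := by
    rw [tsum_congr hterm]
    exact ((summable_remTerm k hk (n + 1) hs1).hasSum.add (hz.mul_left _)).tsum_eq
  have hG := inv_Gamma_mul_Gamma (n + 1) (s := s) (by push_cast; linarith)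
  have e : s + ((n + 1 : ℕ) : ℂ) - 1 = s + n := by push_cast; ring
  rw [e] at hG
  rw [remSum, htsum, remSum, mainTerm, ← hG]
  ring

lemma approx_eq_of_le (k : ℕ) (hk : 2 ≤ k) {n m : ℕ} (hnm : n ≤ m) {s : ℂ}
    (hs : s ∈ halfPlane k n) : approx k n s = approx k m s := by
  induction m, hnm using Nat.le_induction with
  | base => rfl
  | succ m hm ih =>
    rw [ih, approx, approx, Finset.sum_range_succ _ (m + 1),
      remSum_succ k hk m (halfPlane_mono k hk hm hs)]
    ring

lemma approx_zero_eq (k : ℕ) (hk : 2 ≤ k) {s : ℂ} (hs : 1 < s.re) :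
    approx k 0 s = ∑' d : ℕ, ((d : ℂ) + 1) ^ (-s) *
      ∑' i : ℕ, (((d + 1) ^ (k - 1) + i : ℕ) : ℂ) ^ (-s) := by
  have hk' : (2 : ℝ) ≤ k := by exact_mod_cast hk
  have hmem : s ∈ halfPlane k 0 := by
    simp only [halfPlane, mem_ofPred_eq]; push_cast; nlinarith
  have hz := hasSum_zeta_term k hk 0 (s := s) (by push_cast; nlinarith)
  have hΓ : Complex.Gamma s ≠ 0 := Complex.Gamma_ne_zero_of_re_pos (by linarith)
  have hterm : ∀ d : ℕ, ((d : ℂ) + 1) ^ (-s) *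
      ∑' i : ℕ, (((d + 1) ^ (k - 1) + i : ℕ) : ℂ) ^ (-s) = (Complex.Gamma s)⁻¹ *
        (remTerm k 0 d s + Complex.Gamma (s - 1) * (((d : ℂ) + 1) ^ (-s) *
        (((((d : ℝ) + 1) ^ (k - 1) : ℝ)) : ℂ) ^ (-(s + (0 : ℕ) - 1)))) := by
    intro d
    have h1 := (hasSum_mellin_remKer_zero (M := (d + 1) ^ (k - 1)) (by positivity) hs).tsum_eq
    rw [tsum_mul_left] at h1
    have e : (((d + 1) ^ (k - 1) : ℕ) : ℝ) = ((d : ℝ) + 1) ^ (k - 1) := by push_cast; ring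
    rw [e, mellin_remKer_zero (by positivity) hs] at h1
    rw [remTerm]
    simp only [Nat.cast_zero, add_zero, zero_add]
    rw [eq_comm, inv_mul_eq_iff_eq_mul₀ hΓ, mul_left_comm (Complex.Gamma s), h1]
    ring
  rw [tsum_congr hterm, tsum_mul_left,
    ((summable_remTerm k hk 0 hmem).hasSum.add (hz.mul_left _)).tsum_eq]
  have hG := inv_Gamma_mul_Gamma 0 (s := s) (by push_cast; linarith)
  rw [Nat.cast_zero, add_zero] at hG
  simp only [approx, zero_add, Finset.range_one, Finset.sum_singleton, mainTerm, todd_zero,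
    remSum, ← hG]
  push_cast
  ring

/-! ### The Dirichlet series as a double sum -/

lemma tsum_ite_le_eq {M : ℕ} (hM : 0 < M) (s : ℂ) :
    ∑' m : ℕ+, (if M ≤ (m : ℕ) then ((m : ℕ) : ℂ) ^ (-s) else 0) =
      ∑' i : ℕ, ((M + i : ℕ) : ℂ) ^ (-s) := by
  let g : ℕ → ℕ+ := fun i => ⟨M + i, by omega⟩
  have hg : Function.Injective g := by
    intro a b h
    have : M + a = M + b := congrArg PNat.val h
    omega
  rw [← hg.tsum_eq]
  · refine tsum_congr fun i => ?_
    simp [g]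
  · intro m hm
    have hm' : M ≤ (m : ℕ) := by
      by_contra h
      simp [h] at hm
    exact ⟨m - M, PNat.eq (show M + ((m : ℕ) - M) = m by omega)⟩

lemma wigertD_eq (k : ℕ) (hk : 2 ≤ k) (n : ℕ+) :
    wigertD k n = ((n : ℕ).divisorsAntidiagonal.filter fun x => x.1 ^ (k - 1) ≤ x.2).card := by
  rw [wigertD, ← Nat.map_div_right_divisors, Finset.filter_map, Finset.card_map]
  congr 1
  refine Finset.filter_congr fun d hd => ?_
  have hdn := Nat.dvd_of_mem_divisors hd
  have hd0 : 0 < d := Nat.pos_of_mem_divisors hd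
  obtain ⟨j, rfl⟩ : ∃ j, k = j + 1 := ⟨k - 1, by omega⟩
  change d ^ (j + 1) ≤ n ↔ d ^ j ≤ n / d
  rw [Nat.le_div_iff_mul_le hd0, pow_succ]

lemma summable_pnat_cpow {s : ℂ} (hs : 1 < s.re) :
    Summable fun m : ℕ+ => ‖((m : ℕ) : ℂ) ^ (-s)‖ := by
  have h := (Complex.summable_one_div_nat_cpow.2 hs).norm
  have h2 := h.comp_injective PNat.coe_injective
  refine h2.congr fun m => ?_
  simp [Complex.cpow_neg]

/-- The summand `(dm)^{-s}` of the double series, restricted to the pairs with `d^{k-1} ≤ m`. -/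
def pairTerm (k : ℕ) (s : ℂ) (x : ℕ+ × ℕ+) : ℂ :=
  if (x.1 : ℕ) ^ (k - 1) ≤ x.2 then ((x.1 : ℕ) : ℂ) ^ (-s) * ((x.2 : ℕ) : ℂ) ^ (-s) else 0

lemma summable_pairTerm (k : ℕ) {s : ℂ} (hs : 1 < s.re) : Summable (pairTerm k s) := by
  refine Summable.of_norm_bounded (g := fun x : ℕ+ × ℕ+ =>
    ‖((x.1 : ℕ) : ℂ) ^ (-s)‖ * ‖((x.2 : ℕ) : ℂ) ^ (-s)‖)
    ((summable_pnat_cpow hs).mul_of_nonneg (summable_pnat_cpow hs)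
      (fun _ => norm_nonneg _) (fun _ => norm_nonneg _)) fun x => ?_
  rw [pairTerm]
  split_ifs
  · rw [norm_mul]
  · rw [norm_zero]; positivity

lemma tsum_pairTerm (k : ℕ) {s : ℂ} (hs : 1 < s.re) :
    ∑' x, pairTerm k s x = ∑' d : ℕ, ((d : ℂ) + 1) ^ (-s) *
      ∑' i : ℕ, (((d + 1) ^ (k - 1) + i : ℕ) : ℂ) ^ (-s) := by
  rw [(summable_pairTerm k hs).tsum_prod]
  have h2 : ∀ d : ℕ+, ∑' m : ℕ+, pairTerm k s (d, m) = ((d : ℕ) : ℂ) ^ (-s) *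
      ∑' i : ℕ, (((d : ℕ) ^ (k - 1) + i : ℕ) : ℂ) ^ (-s) := by
    intro d
    rw [← tsum_ite_le_eq (pow_pos d.pos _) s, ← tsum_mul_left]
    refine tsum_congr fun m => ?_
    rw [pairTerm]
    split_ifs <;> simp
  rw [tsum_congr h2, tsum_pnat_eq_tsum_succ (f := fun d : ℕ => (d : ℂ) ^ (-s) *
      ∑' i : ℕ, ((d ^ (k - 1) + i : ℕ) : ℂ) ^ (-s))]
  refine tsum_congr fun d => ?_
  rw [Nat.cast_add_one]

lemma pairTerm_sigma (k : ℕ) (s : ℂ) (n : ℕ+) (c : (n : ℕ).divisorsAntidiagonal) :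
    pairTerm k s (sigmaAntidiagonalEquivProd ⟨n, c⟩) =
      if c.1.1 ^ (k - 1) ≤ c.1.2 then ((n : ℕ) : ℂ) ^ (-s) else 0 := by
  obtain ⟨⟨a, b⟩, hab⟩ := c
  have hn : a * b = n := (Nat.mem_divisorsAntidiagonal.1 hab).1
  have hpow : ((n : ℕ) : ℂ) ^ (-s) = (a : ℂ) ^ (-s) * (b : ℂ) ^ (-s) := by
    rw [← hn, Nat.cast_mul, Complex.natCast_mul_natCast_cpow]
  rw [hpow]
  rfl

lemma dirichlet_eq (k : ℕ) (hk : 2 ≤ k) {s : ℂ} (hs : 1 < s.re) :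
    ∑' j : ℕ+, (wigertD k j : ℂ) * ((j : ℕ) : ℂ) ^ (-s) =
      ∑' d : ℕ, ((d : ℂ) + 1) ^ (-s) *
        ∑' i : ℕ, (((d + 1) ^ (k - 1) + i : ℕ) : ℂ) ^ (-s) := by
  have hsum : Summable (pairTerm k s ∘ sigmaAntidiagonalEquivProd) :=
    sigmaAntidiagonalEquivProd.summable_iff.2 (summable_pairTerm k hs)
  have hprod : ∑' x, pairTerm k s x =
      ∑' n : ℕ+, ∑' c : (n : ℕ).divisorsAntidiagonal,
        pairTerm k s (sigmaAntidiagonalEquivProd ⟨n, c⟩) :=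
    (sigmaAntidiagonalEquivProd.tsum_eq (pairTerm k s)).symm.trans hsum.tsum_sigma
  rw [← tsum_pairTerm k hs, hprod]
  refine tsum_congr fun n => ?_
  rw [tsum_congr (pairTerm_sigma k s n), tsum_fintype, Finset.univ_eq_attach,
    (n : ℕ).divisorsAntidiagonal.sum_attach
      (fun x : ℕ × ℕ => if x.1 ^ (k - 1) ≤ x.2 then ((n : ℕ) : ℂ) ^ (-s) else 0),
    ← Finset.sum_filter, Finset.sum_const, nsmul_eq_mul, wigertD_eq k hk]

/-! ### The pole of each main term -/

/-- The entire function `(s - 1) ζ(s)`, with value `1` at `s = 1`. -/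
def zetaReg : ℂ → ℂ := Function.update (fun s => (s - 1) * riemannZeta s) 1 1

lemma zetaReg_of_ne {s : ℂ} (hs : s ≠ 1) : zetaReg s = (s - 1) * riemannZeta s := by
  simp [zetaReg, hs]

lemma zetaReg_one : zetaReg 1 = 1 := by simp [zetaReg]

lemma analyticAt_zetaReg_one : AnalyticAt ℂ zetaReg 1 := by
  refine Complex.analyticAt_of_differentiable_on_punctured_nhds_of_continuousAt ?_ ?_
  · filter_upwards [self_mem_nhdsWithin] with z hz
    have hz : z ≠ 1 := hz
    have h : DifferentiableAt ℂ (fun s => (s - 1) * riemannZeta s) z :=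
      (by fun_prop : DifferentiableAt ℂ (fun s : ℂ => s - 1) z).mul
        (differentiableAt_riemannZeta hz)
    refine h.congr_of_eventuallyEq ?_
    filter_upwards [isOpen_ne.mem_nhds hz] with w hw using zetaReg_of_ne hw
  · simpa only [zetaReg, continuousAt_update_same] using riemannZeta_residue_one

lemma analyticAt_riemannZeta {s : ℂ} (hs : s ≠ 1) : AnalyticAt ℂ riemannZeta s := by
  refine (DifferentiableOn.analyticAt (s := {1}ᶜ) (fun z hz => ?_) (isOpen_ne.mem_nhds hs))
  exact (differentiableAt_riemannZeta hz).differentiableWithinAt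

/-- The point where the zeta factor of `mainTerm k j` has its pole. -/
def poleAt (k j : ℕ) : ℂ := (1 - ((k : ℂ) - 1) * ((j : ℂ) - 1)) / k

lemma zetaArg_sub_one (k : ℕ) (hk : 2 ≤ k) (j : ℕ) (s : ℂ) :
    k * s + ((k : ℂ) - 1) * ((j : ℂ) - 1) - 1 = k * (s - poleAt k j) := by
  have : (k : ℂ) ≠ 0 := by exact_mod_cast (by omega : k ≠ 0)
  rw [poleAt]; field_simp; ring

lemma zetaArg_poleAt (k : ℕ) (hk : 2 ≤ k) (j : ℕ) :
    k * poleAt k j + ((k : ℂ) - 1) * ((j : ℂ) - 1) = 1 := by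
  have := zetaArg_sub_one k hk j (poleAt k j)
  rw [sub_self, mul_zero] at this
  exact sub_eq_zero.1 this

lemma zetaArg_ne_one (k : ℕ) (hk : 2 ≤ k) (j : ℕ) {s : ℂ} (hs : s ≠ poleAt k j) :
    k * s + ((k : ℂ) - 1) * ((j : ℂ) - 1) ≠ 1 := by
  have : (k : ℂ) ≠ 0 := by exact_mod_cast (by omega : k ≠ 0)
  rw [← sub_ne_zero, zetaArg_sub_one k hk]
  exact mul_ne_zero this (sub_ne_zero.2 hs)

lemma poleAt_injective (k : ℕ) (hk : 2 ≤ k) : Function.Injective (poleAt k) := by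
  intro i j h
  have h0 : (k : ℂ) - 1 ≠ 0 := by
    rw [sub_ne_zero]; exact_mod_cast (by omega : k ≠ 1)
  have h1 := zetaArg_poleAt k hk i
  rw [h] at h1
  have h2 := mul_left_cancel₀ h0 (add_left_cancel (h1.trans (zetaArg_poleAt k hk j).symm))
  exact_mod_cast (sub_left_injective h2 : (i : ℂ) = j)

lemma poleAt_zero (k : ℕ) (hk : 2 ≤ k) : poleAt k 0 = 1 := by
  have : (k : ℂ) ≠ 0 := by exact_mod_cast (by omega : k ≠ 0)
  rw [poleAt]; field_simp; push_cast; ring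

lemma poleAt_one (k : ℕ) : poleAt k 1 = 1 / (k : ℂ) := by simp [poleAt]

lemma poleAt_even (k n : ℕ) :
    poleAt k (2 * n + 2) = (1 - ((k : ℂ) - 1) * (2 * (n : ℂ) + 1)) / (k : ℂ) := by
  rw [poleAt]; push_cast; ring

lemma mem_polesSet_or_todd (k : ℕ) (hk : 2 ≤ k) (j : ℕ) : poleAt k j ∈ polesSet k ∨ todd j = 0 := by
  match j with
  | 0 => exact Or.inl (Or.inl (Or.inl (poleAt_zero k hk)))
  | 1 => exact Or.inl (Or.inl (Or.inr (poleAt_one k)))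
  | j + 2 =>
    rcases Nat.even_or_odd' j with ⟨n, rfl | rfl⟩
    · exact Or.inl (Or.inr ⟨n, poleAt_even k n⟩)
    · exact Or.inr (todd_odd n)

lemma exists_poleAt_of_mem (k : ℕ) (hk : 2 ≤ k) {a : ℂ} (ha : a ∈ polesSet k) :
    ∃ i, a = poleAt k i := by
  rcases ha with (rfl | rfl) | ⟨n, rfl⟩
  · exact ⟨0, (poleAt_zero k hk).symm⟩
  · exact ⟨1, (poleAt_one k).symm⟩
  · exact ⟨2 * n + 2, (poleAt_even k n).symm⟩

lemma analyticAt_gammaQuot_succ (j : ℕ) (a : ℂ) : AnalyticAt ℂ (gammaQuot (j + 1)) a := by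
  change AnalyticAt ℂ (fun s : ℂ => ∏ i ∈ Finset.range j, (s + i)) a
  exact Finset.analyticAt_fun_prod _ fun i _ => by fun_prop

lemma analyticAt_mainTerm (k : ℕ) (hk : 2 ≤ k) (j : ℕ) {a : ℂ}
    (h : a ≠ poleAt k j ∨ todd j = 0) : AnalyticAt ℂ (mainTerm k j) a := by
  by_cases h0 : todd j = 0
  · have : mainTerm k j = fun _ => 0 := by ext s; simp [mainTerm, h0]
    rw [this]; exact analyticAt_const
  have ha : a ≠ poleAt k j := h.resolve_right h0
  refine (analyticAt_const.mul ?_).mul ?_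
  · cases j with
    | zero =>
      rw [poleAt_zero k hk] at ha
      exact analyticAt_const.div (by fun_prop) (sub_ne_zero.2 ha)
    | succ j => exact analyticAt_gammaQuot_succ j a
  · exact (analyticAt_riemannZeta (zetaArg_ne_one k hk j ha)).fun_comp
      (f := fun s : ℂ => (k : ℂ) * s + ((k : ℂ) - 1) * ((j : ℂ) - 1)) (by fun_prop)

/-! ### The continuation and its poles -/

/-- The continuation of the Dirichlet series, glued from the functions `approx k n`. -/
def wigertCont (k : ℕ) (hk : 2 ≤ k) (s : ℂ) : ℂ :=
  approx k (exists_mem_halfPlane k hk 0 s).choose s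

lemma wigertCont_eq (k : ℕ) (hk : 2 ≤ k) (n : ℕ) {s : ℂ} (hs : s ∈ halfPlane k n) :
    wigertCont k hk s = approx k n s := by
  have h := (exists_mem_halfPlane k hk 0 s).choose_spec.2
  rw [wigertCont, approx_eq_of_le k hk (le_max_left _ n) h,
    approx_eq_of_le k hk (le_max_right _ n) hs]

lemma wigertCont_eventuallyEq (k : ℕ) (hk : 2 ≤ k) (n : ℕ) {a : ℂ} (ha : a ∈ halfPlane k n) :
    wigertCont k hk =ᶠ[𝓝 a] approx k n := by
  filter_upwards [(isOpen_halfPlane k n).mem_nhds ha] with s hs using wigertCont_eq k hk n hs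

lemma analyticAt_wigertCont (k : ℕ) (hk : 2 ≤ k) {a : ℂ} (ha : a ∉ polesSet k) :
    AnalyticAt ℂ (wigertCont k hk) a := by
  obtain ⟨n, -, hn⟩ := exists_mem_halfPlane k hk 0 a
  refine AnalyticAt.congr ?_ (wigertCont_eventuallyEq k hk n hn).symm
  refine AnalyticAt.add (Finset.analyticAt_fun_sum _ fun j _ => ?_) (analyticAt_remSum k hk n hn)
  refine analyticAt_mainTerm k hk j ((mem_polesSet_or_todd k hk j).imp_left ?_)
  rintro h rfl
  exact ha h

/-- Near the pole of the `i`-th main term, everything else is analytic. -/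
lemma wigertCont_near_pole (k : ℕ) (hk : 2 ≤ k) (i : ℕ) :
    ∃ A : ℂ → ℂ, AnalyticAt ℂ A (poleAt k i) ∧
      ∀ᶠ s in 𝓝 (poleAt k i), wigertCont k hk s = mainTerm k i s + A s := by
  obtain ⟨n, hin, hn⟩ := exists_mem_halfPlane k hk i (poleAt k i)
  refine ⟨fun s => ∑ j ∈ (Finset.range (n + 1)).erase i, mainTerm k j s + remSum k n s,
    AnalyticAt.add (Finset.analyticAt_fun_sum _ fun j hj => ?_) (analyticAt_remSum k hk n hn), ?_⟩
  · refine analyticAt_mainTerm k hk j (Or.inl fun h => ?_)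
    exact Finset.ne_of_mem_erase hj (poleAt_injective k hk h).symm
  · filter_upwards [wigertCont_eventuallyEq k hk n hn] with s hs
    rw [hs, approx, ← add_assoc, Finset.add_sum_erase _ (fun j => mainTerm k j s)
      (Finset.mem_range.2 (by omega))]

/-- An analytic function agreeing with `φ` on a punctured neighbourhood of `a ∈ S` can be
modified away from `a` so as to agree with `φ` on all of the complement of `S`. -/
lemma exists_extension {S : Set ℂ} {a : ℂ} (ha : a ∈ S) {H φ : ℂ → ℂ} (hH : AnalyticAt ℂ H a)
    (h : ∀ᶠ s in 𝓝[≠] a, H s = φ s) :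
    ∃ G : ℂ → ℂ, AnalyticAt ℂ G a ∧ G a = H a ∧ ∀ s ∉ S, G s = φ s := by
  classical
  refine ⟨fun s => if s ∈ S then H s else φ s, hH.congr ?_, by simp [ha], fun s hs => by simp [hs]⟩
  filter_upwards [eventually_nhdsWithin_iff.1 h] with s hs
  by_cases hsS : s ∈ S
  · simp [hsS]
  · simp only [hsS, if_false]
    exact hs fun h => hsS (h ▸ ha)

lemma analyticAt_zetaReg_arg (k : ℕ) (hk : 2 ≤ k) (i : ℕ) :
    AnalyticAt ℂ (fun s : ℂ => zetaReg (k * s + ((k : ℂ) - 1) * ((i : ℂ) - 1))) (poleAt k i) := by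
  refine AnalyticAt.fun_comp (g := zetaReg) ?_ (by fun_prop)
  rw [zetaArg_poleAt k hk i]
  exact analyticAt_zetaReg_one

lemma zetaReg_arg (k : ℕ) (hk : 2 ≤ k) (i : ℕ) {s : ℂ} (hs : s ≠ poleAt k i) :
    zetaReg (k * s + ((k : ℂ) - 1) * ((i : ℂ) - 1)) / k =
      (s - poleAt k i) * riemannZeta (k * s + ((k : ℂ) - 1) * ((i : ℂ) - 1)) := by
  have : (k : ℂ) ≠ 0 := by exact_mod_cast (by omega : k ≠ 0)
  rw [zetaReg_of_ne (zetaArg_ne_one k hk i hs), zetaArg_sub_one k hk]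
  field_simp

/-- At the pole of a main term of positive index the continuation has at most a simple pole, with
residue `b_i (Γ(s + i - 1) / Γ(s)) / k`. -/
lemma simple_pole (k : ℕ) (hk : 2 ≤ k) (i : ℕ) (hmem : poleAt k (i + 1) ∈ polesSet k) :
    ∃ G : ℂ → ℂ, AnalyticAt ℂ G (poleAt k (i + 1)) ∧
      G (poleAt k (i + 1)) = todd (i + 1) * gammaQuot (i + 1) (poleAt k (i + 1)) / k ∧
      ∀ s ∉ polesSet k, G s = (s - poleAt k (i + 1)) * wigertCont k hk s := by
  obtain ⟨A, hA, hev⟩ := wigertCont_near_pole k hk (i + 1)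
  obtain ⟨G, hG, hGa, hGs⟩ := exists_extension hmem
    (H := fun s => todd (i + 1) * gammaQuot (i + 1) s *
      (zetaReg (k * s + ((k : ℂ) - 1) * (((i + 1 : ℕ) : ℂ) - 1)) / k) +
      (s - poleAt k (i + 1)) * A s)
    (φ := fun s => (s - poleAt k (i + 1)) * wigertCont k hk s)
    (((analyticAt_const.mul (analyticAt_gammaQuot_succ i _)).mul
      (analyticAt_zetaReg_arg k hk (i + 1)).div_const).add
        ((by fun_prop : AnalyticAt ℂ (fun s => s - poleAt k (i + 1)) _).mul hA)) (by
      filter_upwards [hev.filter_mono nhdsWithin_le_nhds, self_mem_nhdsWithin] with s hs hne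
      rw [hs, zetaReg_arg k hk (i + 1) hne, mainTerm]
      ring)
  refine ⟨G, hG, ?_, hGs⟩
  rw [hGa, zetaArg_poleAt k hk, zetaReg_one]
  ring

lemma double_pole (k : ℕ) (hk : 2 ≤ k) :
    ∃ G : ℂ → ℂ, AnalyticAt ℂ G 1 ∧ G 1 = 1 / k ∧
      ∀ s ∉ polesSet k, G s = (s - 1) ^ 2 * wigertCont k hk s := by
  have hmem : (1 : ℂ) ∈ polesSet k := Or.inl (Or.inl rfl)
  obtain ⟨A, hA, hev⟩ := wigertCont_near_pole k hk 0
  have hZ := analyticAt_zetaReg_arg k hk 0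
  have h1 := zetaArg_poleAt k hk 0
  have hr := fun s => zetaReg_arg k hk 0 (s := s)
  rw [poleAt_zero k hk] at hA hev hZ h1
  rw [poleAt_zero k hk] at hr
  obtain ⟨G, hG, hGa, hGs⟩ := exists_extension hmem
    (H := fun s => zetaReg (k * s + ((k : ℂ) - 1) * (((0 : ℕ) : ℂ) - 1)) / k + (s - 1) ^ 2 * A s)
    (φ := fun s => (s - 1) ^ 2 * wigertCont k hk s)
    (hZ.div_const.add ((by fun_prop : AnalyticAt ℂ (fun s : ℂ => (s - 1) ^ 2) 1).mul hA)) (by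
      filter_upwards [hev.filter_mono nhdsWithin_le_nhds, self_mem_nhdsWithin] with s hs hne
      have hne' : s - 1 ≠ 0 := sub_ne_zero.2 hne
      rw [hs, hr s hne, mainTerm, todd_zero, gammaQuot]
      push_cast
      field_simp)
  refine ⟨G, hG, ?_, hGs⟩
  rw [hGa, h1, zetaReg_one]
  ring

theorem wigert_dirichlet_series_meromorphic_continuation (k : ℕ) (hk : 2 ≤ k) :
    ∃ F : ℂ → ℂ,
      AnalyticOnNhd ℂ F (polesSet k)ᶜ ∧
      (∀ s : ℂ, 1 < s.re → F s = ∑' j : ℕ+, (wigertD k j : ℂ) * ((j : ℕ) : ℂ) ^ (-s)) ∧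
      (∃ G : ℂ → ℂ, AnalyticAt ℂ G 1 ∧ G 1 ≠ 0 ∧
        ∀ s ∉ polesSet k, G s = (s - 1) ^ 2 * F s) ∧
      (∃ G : ℂ → ℂ, AnalyticAt ℂ G (1 / (k : ℂ)) ∧ G (1 / (k : ℂ)) ≠ 0 ∧
        ∀ s ∉ polesSet k, G s = (s - 1 / (k : ℂ)) * F s) ∧
      (∀ a ∈ polesSet k, a ≠ 1 →
        ∃ G : ℂ → ℂ, AnalyticAt ℂ G a ∧ ∀ s ∉ polesSet k, G s = (s - a) * F s) := by
  have hk0 : (k : ℂ) ≠ 0 := by exact_mod_cast (by omega : k ≠ 0)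
  refine ⟨wigertCont k hk, fun a ha => analyticAt_wigertCont k hk ha, fun s hs => ?_, ?_, ?_, ?_⟩
  · have hmem : s ∈ halfPlane k 0 := by
      have hk' : (2 : ℝ) ≤ k := by exact_mod_cast hk
      simp only [halfPlane, mem_ofPred_eq]; push_cast; nlinarith
    rw [wigertCont_eq k hk 0 hmem, approx_zero_eq k hk hs, dirichlet_eq k hk hs]
  · obtain ⟨G, hG, hG1, hGs⟩ := double_pole k hk
    exact ⟨G, hG, by rw [hG1]; exact one_div_ne_zero hk0, hGs⟩
  · obtain ⟨G, hG, hG1, hGs⟩ := simple_pole k hk 0 (by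
      rw [poleAt_one]; exact Or.inl (Or.inr rfl))
    rw [zero_add, poleAt_one] at hG hG1 hGs
    refine ⟨G, hG, ?_, hGs⟩
    rw [hG1, todd_one]
    simp [gammaQuot, hk0]
  · intro a ha ha1
    obtain ⟨i, rfl⟩ := exists_poleAt_of_mem k hk ha
    cases i with
    | zero => exact absurd (poleAt_zero k hk) ha1
    | succ i =>
      obtain ⟨G, hG, -, hGs⟩ := simple_pole k hk i ha
      exact ⟨G, hG, hGs⟩
end
end

section
/- Let k ≥ 2 be an integer, s ∈ ℂ with Re(s) > 1, let J ≥ 0 be an integer, set N := 2J + 1, and let 0 < ε < 1. Then ∑_{j=1}^∞ d^{(1/k)}(j) j^{−s} = (1/2)ζ(ks) + ζ(ks − (k−1))/(s − 1) − ∑_{j=0}^{J} [Γ(s + 2j + 1)/((2j+1)! Γ(s))] ζ(−2j−1) ζ(ks + (k−1)(2j+1)) + (1/(2π)) ∫_{−∞}^{∞} [Γ(s + N + ε + it) Γ(−(N + ε + it)) / Γ(s)] ζ(−(N + ε + it)) ζ(ks + (k−1)(N + ε + it)) dt, where the integral converges absolutely. -/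
/-!
Grouping the Dirichlet series by the divisor `d` and writing `n = d m`, the condition `d ^ k ≤ n`
becomes `m ≥ d ^ (k - 1)`, so that
`∑ d^{(1/k)}(n) n^{-s} = ∑_d d^{-s} ∑_{m ≥ 0} (m + d^{k-1})^{-s}` (`tsum_wigertD`).
The inner sum is expanded in `a = d^{k-1}` (`hasSum_hurwitz`), and summing the expansion over `d`
produces the zeta values `ζ(ks)`, `ζ(ks - (k-1))`, `ζ(ks + (k-1)(2j+1))`, and
`ζ(ks + (k-1) w)` under the integral sign (`integrable_mul_zeta`).

For the expansion, `Γ(s) ∑ (m + a)^{-s} = ∫₀^∞ x^{s-1} e^{-ax} / (1 - e^{-x}) dx`. The function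
`1 / (1 - e^{-x})` is split into `1/x + 1/2`, finitely many odd powers of `x`, and a remainder
`bernoulliRem J x`. The first parts give Gamma integrals; the remainder is the inverse Mellin
transform of `gammaZeta w = Γ(-w) ζ(-w)` on the line `Re w = c`, `2J + 1 < c < 2J + 2`
(`inverse_gammaZeta`), and Fubini gives the Mellin–Barnes integral (`integral_bernoulliRem`).

The inverse Mellin transform is found without moving a contour. By the functional equation
`Γ(-w) ζ(-w) = (2π)^{-w} ζ(1 + w) / (2 cos (π w / 2))`, so it is a sum over `n` of inverse
transforms of `1 / (2 cos (π w / 2))` at `y = x / (2 π n)`. In the strip `|Re w| < 1` that is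
`π⁻¹ y / (1 + y²)`, by Mellin inversion and Euler's Beta integral; further right, the
antiperiodicity of the cosine replaces it by `π⁻¹ (-1)^{J+1} y^{2J+3} / (1 + y²)`, which is the
remainder of the geometric series for `π⁻¹ y / (1 + y²)`. Summed over `n`, the full kernel gives
`1 / (1 - e^{-x}) - 1/x - 1/2` by the partial fractions of the cotangent, and the subtracted
powers give the values `ζ(-2j-1)`.
-/

noncomputable section

section Helpers

open Complex MeasureTheory Set Filter Topology

/-! ### The Mellin transform of `y / (1 + y ^ 2)` and its inversion -/

/-- A quadratic lower bound for the cosine on a vertical line; this much growth already makes its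
reciprocal integrable there. -/
lemma norm_cos_line_ge (c t : ℝ) :
    |Real.cos (Real.pi * c / 2)| * ((1 + t ^ 2) / 2) ≤
      ‖Complex.cos (Real.pi * ((c : ℂ) + t * I) / 2)‖ := by
  set x := Real.pi * c / 2 with hx
  set y := Real.pi * t / 2 with hy
  have e : (Real.pi * ((c : ℂ) + t * I) / 2) = (x : ℂ) + (y : ℂ) * I := by
    rw [hx, hy]; push_cast; ring
  rw [e, Complex.cos_add_mul_I, ← ofReal_cos, ← ofReal_sin, ← ofReal_cosh, ← ofReal_sinh]
  have key (p q : ℝ) : ‖(p : ℂ) - (q : ℂ) * I‖ ^ 2 = p ^ 2 + q ^ 2 := by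
    rw [← Complex.normSq_eq_norm_sq, Complex.normSq_apply]
    simp
    ring
  rw [← ofReal_mul, ← ofReal_mul]
  have h2 : |Real.cos x| * Real.cosh y ≤
      ‖((Real.cos x * Real.cosh y : ℝ) : ℂ) - ((Real.sin x * Real.sinh y : ℝ) : ℂ) * I‖ := by
    refine (sq_le_sq₀ (by positivity) (norm_nonneg _)).1 ?_
    rw [key, mul_pow, sq_abs]
    nlinarith [sq_nonneg (Real.sin x * Real.sinh y)]
  refine le_trans ?_ h2
  gcongr
  have h3 : t ^ 2 ≤ y ^ 2 := by
    rw [hy]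
    have := Real.pi_gt_three
    have h4 : (2:ℝ)^2 ≤ Real.pi ^ 2 := by gcongr; linarith
    nlinarith [sq_nonneg t]
  have h5 : 1 + y ^ 2 / 2 ≤ Real.cosh y := by
    rw [← Real.cosh_abs, Real.cosh_eq]
    have h6 := Real.quadratic_le_exp_of_nonneg (abs_nonneg y)
    have h7 := Real.add_one_le_exp (-|y|)
    have h8 : Real.cosh |y| = Real.cosh (2 * (|y| / 2)) := by ring_nf
    rw [← Real.cosh_eq, h8, Real.cosh_two_mul, Real.cosh_sq]
    have h9 : |y| / 2 ≤ Real.sinh (|y| / 2) := Real.self_le_sinh_iff.2 (by positivity)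
    have h10 : (|y| / 2) ^ 2 ≤ Real.sinh (|y| / 2) ^ 2 := by gcongr
    have h11 : (|y| / 2) ^ 2 = y ^ 2 / 4 := by rw [div_pow, sq_abs]; norm_num
    linarith
  linarith

lemma cos_line_ne_zero {c : ℝ} (hc : Real.cos (Real.pi * c / 2) ≠ 0) (t : ℝ) :
    Complex.cos (Real.pi * ((c : ℂ) + t * I) / 2) ≠ 0 := by
  rw [← norm_pos_iff]
  refine lt_of_lt_of_le ?_ (norm_cos_line_ge c t)
  have := abs_pos.2 hc
  positivity

lemma integrable_inv_cos_line {c : ℝ} (hc : Real.cos (Real.pi * c / 2) ≠ 0) :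
    Integrable (fun t : ℝ => 1 / (2 * Complex.cos (Real.pi * ((c : ℂ) + t * I) / 2))) := by
  have hc' := abs_pos.2 hc
  refine Integrable.mono' (integrable_inv_one_add_sq.const_mul
    (|Real.cos (Real.pi * c / 2)|⁻¹)) ?_ (Eventually.of_forall fun t => ?_)
  · refine Continuous.aestronglyMeasurable ?_
    refine Continuous.div continuous_const (by fun_prop) fun t => ?_
    exact mul_ne_zero two_ne_zero (cos_line_ne_zero hc t)
  · have h := norm_cos_line_ge c t
    rw [norm_div, norm_mul, norm_one, Complex.norm_ofNat, ← mul_inv, ← one_div]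
    apply one_div_le_one_div_of_le (by positivity)
    linarith

lemma mellinConvergent_inv_one_add {u : ℂ} (h0 : 0 < u.re) (h1 : u.re < 1) :
    MellinConvergent (fun y : ℝ => (1 : ℂ) / (1 + (y : ℂ))) u := by
  have hn : ∀ y : ℝ, 0 ≤ y → ‖(1 : ℂ) / (1 + (y : ℂ))‖ = 1 / (1 + y) := fun y hy => by
    rw [norm_div, norm_one, ← ofReal_one, ← ofReal_add, norm_real, Real.norm_of_nonneg (by positivity)]
  refine mellinConvergent_of_isBigO_rpow (a := 1) (b := 0) ?_ ?_ h1 ?_ h0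
  · refine ContinuousOn.locallyIntegrableOn ?_ measurableSet_Ioi
    refine ContinuousOn.div (by fun_prop) (by fun_prop) fun y hy => ?_
    have : (0 : ℝ) < 1 + y := by have := mem_Ioi.1 hy; linarith
    exact_mod_cast this.ne'
  · refine Asymptotics.IsBigO.of_bound 1 ?_
    filter_upwards [eventually_gt_atTop 0] with y hy
    rw [hn y hy.le, Real.rpow_neg_one, one_mul, norm_inv, Real.norm_of_nonneg hy.le, ← one_div]
    apply one_div_le_one_div_of_le hy
    linarith
  · refine Asymptotics.IsBigO.of_bound 1 ?_
    filter_upwards [self_mem_nhdsWithin] with y hy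
    have hy : 0 < y := hy
    rw [hn y hy.le]
    simp only [neg_zero, Real.rpow_zero, norm_one, mul_one]
    rw [div_le_one (by positivity)]
    linarith

/-- Euler's integral: the substitution `x = y / (1 + y)` turns the Mellin transform into the Beta
integral `B(u, 1 - u) = Γ(u) Γ(1 - u)`. -/
lemma mellin_inv_one_add {u : ℂ} (h0 : 0 < u.re) (h1 : u.re < 1) :
    mellin (fun y : ℝ => (1 : ℂ) / (1 + (y : ℂ))) u = Real.pi / Complex.sin (Real.pi * u) := by
  rw [← Gamma_mul_Gamma_one_sub]
  have hb := betaIntegral_eq_Gamma_mul_div u (1 - u) h0 (by simpa using h1)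
  rw [add_sub_cancel, Gamma_one, div_one] at hb
  rw [← hb, betaIntegral, intervalIntegral.integral_of_le zero_le_one,
    integral_Ioc_eq_integral_Ioo]
  have himg : (fun y : ℝ => y / (1 + y)) '' Ioi 0 = Ioo 0 1 := by
    ext x
    simp only [mem_image, mem_Ioi, mem_Ioo]
    constructor
    · rintro ⟨y, hy, rfl⟩
      refine ⟨by positivity, ?_⟩
      rw [div_lt_one (by positivity)]
      linarith
    · rintro ⟨hx0, hx1⟩
      have : 0 < 1 - x := by linarith
      refine ⟨x / (1 - x), by positivity, ?_⟩
      field_simp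
      ring
  have hder : ∀ y ∈ Ioi (0 : ℝ), HasDerivWithinAt (fun y : ℝ => y / (1 + y)) (1 / (1 + y) ^ 2)
      (Ioi 0) y := fun y hy => by
    have hy : 0 < y := hy
    have : HasDerivAt (fun y : ℝ => y / (1 + y)) ((1 * (1 + y) - y * 1) / (1 + y) ^ 2) y :=
      (hasDerivAt_id y).div ((hasDerivAt_id y).const_add 1) (by simp; positivity)
    exact (this.congr_deriv (by congr 1; ring)).hasDerivWithinAt
  have hinj : InjOn (fun y : ℝ => y / (1 + y)) (Ioi 0) := fun y hy z hz h => by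
    have hy : 0 < y := hy
    have hz : 0 < z := hz
    simp only at h
    rw [div_eq_div_iff (by positivity) (by positivity)] at h
    linarith
  rw [← himg, integral_image_eq_integral_abs_deriv_smul measurableSet_Ioi hder hinj, mellin]
  refine setIntegral_congr_fun measurableSet_Ioi fun y hy => ?_
  have hy : 0 < y := hy
  have h1y : (0 : ℝ) < 1 + y := by positivity
  have e1 : (1 : ℂ) - ((y / (1 + y) : ℝ) : ℂ) = (((1 + y)⁻¹ : ℝ) : ℂ) := by
    rw [← ofReal_one, ← ofReal_sub]
    congr 1
    field_simp
    ring
  have hne : ((1 + y : ℝ) : ℂ) ≠ 0 := by exact_mod_cast h1y.ne'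
  simp only [smul_eq_mul, real_smul]
  rw [e1, div_eq_mul_inv y, ofReal_mul, mul_cpow_ofReal_nonneg hy.le (by positivity), mul_assoc,
    ← cpow_add _ _ (by exact_mod_cast (inv_pos.2 h1y).ne'),
    abs_of_pos (by positivity), show u - 1 + (1 - u - 1) = -1 by ring, cpow_neg_one]
  push_cast at hne ⊢
  field_simp

/-- The kernel whose Mellin transform is `1 / (2 cos (π w / 2))` on `-1 < Re w < 1`. -/
noncomputable def cosKernel (y : ℝ) : ℂ := ((1 / Real.pi * (y / (1 + y ^ 2)) : ℝ) : ℂ)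

lemma cosKernel_eq (y : ℝ) : cosKernel y = (1 / Real.pi : ℂ) •
    ((y : ℂ) ^ (1 : ℂ) • (fun y : ℝ => (1 : ℂ) / (1 + (y : ℂ))) (y ^ (2 : ℝ))) := by
  simp only [cosKernel, smul_eq_mul, cpow_one, Real.rpow_two]
  push_cast
  ring

lemma mellin_cosKernel {w : ℂ} (h0 : -1 < w.re) (h1 : w.re < 1) :
    MellinConvergent cosKernel w ∧
      mellin cosKernel w = 1 / (2 * Complex.cos (Real.pi * w / 2)) := by
  have hre : ((w + 1) / ((2 : ℝ) : ℂ)).re = (w.re + 1) / 2 := by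
    rw [div_ofReal_re]; simp
  have hu0 : 0 < ((w + 1) / ((2 : ℝ) : ℂ)).re := by rw [hre]; linarith
  have hu1 : ((w + 1) / ((2 : ℝ) : ℂ)).re < 1 := by rw [hre]; linarith
  constructor
  · have := (((MellinConvergent.comp_rpow two_ne_zero).2
      (mellinConvergent_inv_one_add hu0 hu1)))
    have := (MellinConvergent.cpow_smul.2 this).const_smul (1 / Real.pi : ℂ)
    refine IntegrableOn.congr_fun this (fun y hy => ?_) measurableSet_Ioi
    simp only
    rw [cosKernel_eq y]
  · have : mellin cosKernel w = mellin (fun y : ℝ => (1 / Real.pi : ℂ) •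
      ((y : ℂ) ^ (1 : ℂ) • (fun y : ℝ => (1 : ℂ) / (1 + (y : ℂ))) (y ^ (2 : ℝ)))) w := by
      refine setIntegral_congr_fun measurableSet_Ioi fun y hy => ?_
      simp only
      rw [cosKernel_eq y]
    rw [this, mellin_const_smul, mellin_cpow_smul,
      mellin_comp_rpow (fun y : ℝ => (1 : ℂ) / (1 + (y : ℂ))), mellin_inv_one_add hu0 hu1]
    have e : Complex.sin (Real.pi * ((w + 1) / ((2 : ℝ) : ℂ))) = Complex.cos (Real.pi * w / 2) := by
      rw [← Complex.sin_add_pi_div_two]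
      congr 1
      push_cast; ring
    rw [e, abs_of_pos two_pos]
    have : (Real.pi : ℂ) ≠ 0 := by exact_mod_cast Real.pi_ne_zero
    simp only [smul_eq_mul, real_smul]
    push_cast
    field_simp

lemma cosKernel_inversion {c y : ℝ} (h0 : -1 < c) (h1 : c < 1) (hy : 0 < y) :
    ((1 / (2 * Real.pi) : ℝ) : ℂ) * ∫ t : ℝ, (y : ℂ) ^ ((c : ℂ) + t * I) *
      (1 / (2 * Complex.cos (Real.pi * ((c : ℂ) + t * I) / 2))) = cosKernel y := by
  have hcos : Real.cos (Real.pi * c / 2) ≠ 0 := by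
    have := Real.pi_pos
    exact (Real.cos_pos_of_mem_Ioo ⟨by nlinarith, by nlinarith⟩).ne'
  have hm : ∀ t : ℝ, mellin cosKernel ((c : ℂ) + t * I) =
      1 / (2 * Complex.cos (Real.pi * ((c : ℂ) + t * I) / 2)) := fun t =>
    (mellin_cosKernel (by simpa using h0) (by simpa using h1)).2
  have hinv := mellinInv_mellin_eq c cosKernel (inv_pos.2 hy)
    (mellin_cosKernel (by simpa using h0) (by simpa using h1)).1
    (by
      unfold VerticalIntegrable
      simp_rw [hm]
      exact integrable_inv_cos_line hcos)
    (by
      refine Continuous.continuousAt ?_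
      unfold cosKernel
      have : ∀ y : ℝ, 1 + y ^ 2 ≠ 0 := fun y => by positivity
      fun_prop (disch := exact this _))
  -- `mellinInv` uses `y^{-w}`; the symmetry of the kernel under `y ↦ 1/y` turns it into `y^w`.
  have hk : cosKernel y⁻¹ = cosKernel y := by
    unfold cosKernel
    congr 2
    field_simp
    ring
  rw [← hk, ← hinv, mellinInv, real_smul]
  congr 1
  refine integral_congr_ae (Eventually.of_forall fun t => ?_)
  simp only [smul_eq_mul]
  rw [hm, ofReal_inv, inv_cpow_eq_ite, if_neg, cpow_neg, inv_inv]
  rw [arg_ofReal_of_nonneg hy.le]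
  exact Real.pi_pos.ne

/-- The inversion formula for `cosKernel`, transported to the strip `2J + 1 < Re w < 2J + 3` by
the antiperiodicity of `cos (π w / 2)` under `w ↦ w + 2`. -/
lemma cosKernel_inversion_shifted {c y : ℝ} (J : ℕ) (h0 : 2 * J + 1 < c) (h1 : c < 2 * J + 3)
    (hy : 0 < y) :
    ((1 / (2 * Real.pi) : ℝ) : ℂ) * ∫ t : ℝ, (y : ℂ) ^ ((c : ℂ) + t * I) *
      (1 / (2 * Complex.cos (Real.pi * ((c : ℂ) + t * I) / 2))) =
      (-1) ^ (J + 1) * (y : ℂ) ^ (2 * J + 2) * cosKernel y := by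
  have hk := cosKernel_inversion (c := c - (2 * J + 2)) (by linarith) (by linarith) hy
  rw [← hk, mul_left_comm, ← integral_const_mul ((-1 : ℂ) ^ (J + 1) * (y : ℂ) ^ (2 * J + 2))]
  congr 1
  refine integral_congr_ae (Eventually.of_forall fun t => ?_)
  simp only
  have hyne : (y : ℂ) ≠ 0 := by exact_mod_cast hy.ne'
  set w := (((c - (2 * J + 2) : ℝ) : ℂ) + t * I) with hw
  have hw' : (c : ℂ) + t * I = w + (2 * J + 2 : ℕ) := by rw [hw]; push_cast; ring
  have e1 : Real.pi * (w + (2 * J + 2 : ℕ)) / 2 = Real.pi * w / 2 + (J + 1 : ℕ) * Real.pi := by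
    push_cast; ring
  rw [hw', cpow_add _ _ hyne, cpow_natCast, e1,
    show Complex.cos (Real.pi * w / 2 + (J + 1 : ℕ) * Real.pi) =
      (-1) ^ (J + 1) * Complex.cos (Real.pi * w / 2) from
      Complex.cos_antiperiodic.add_nat_mul_eq (J + 1)]
  have e2 : ((-1 : ℂ) ^ (J + 1)) ≠ 0 := pow_ne_zero _ (by norm_num)
  have e3 : (1 : ℂ) / (2 * ((-1) ^ (J + 1) * Complex.cos (Real.pi * w / 2))) =
      (-1) ^ (J + 1) * (1 / (2 * Complex.cos (Real.pi * w / 2))) := by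
    have : ((-1 : ℂ) ^ (J + 1)) * (-1) ^ (J + 1) = 1 := by
      rw [← mul_pow]; norm_num
    field_simp
    rw [sq, this]
  rw [e3]
  ring

/-! ### The inverse Mellin transform of `Γ(-w) ζ(-w)` -/

/-- The factor `Γ(-w) ζ(-w)` of the integrand. -/
noncomputable def gammaZeta (w : ℂ) : ℂ := Gamma (-w) * riemannZeta (-w)

/-- The functional equation of `ζ` combined with the reflection formula of `Γ`. -/
lemma gammaZeta_eq {w : ℂ} (h0 : 0 < w.re) (hn : ∀ n : ℤ, w ≠ n) :
    gammaZeta w = (2 * Real.pi : ℂ) ^ (-w) * riemannZeta (1 + w) *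
      (1 / (2 * Complex.cos (Real.pi * w / 2))) := by
  have hpi : (Real.pi : ℂ) ≠ 0 := by exact_mod_cast Real.pi_ne_zero
  have hfe := riemannZeta_one_sub (s := 1 + w)
    (fun n h => by
      have := congrArg re h
      simp at this
      have h2 : (0 : ℝ) ≤ n := Nat.cast_nonneg n
      linarith)
    (fun h => by
      have : w = 0 := by simpa using h
      simp [this] at h0)
  have hg := Gamma_mul_Gamma_one_sub (-w)
  have hs : Complex.sin (Real.pi * w) ≠ 0 := by
    rw [Ne, Complex.sin_eq_zero_iff]
    rintro ⟨n, h⟩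
    apply hn n
    rw [mul_comm] at h
    exact mul_right_cancel₀ hpi h
  have hs2 : Complex.sin (Real.pi * w) =
      2 * Complex.sin (Real.pi * w / 2) * Complex.cos (Real.pi * w / 2) := by
    rw [← Complex.sin_two_mul]; congr 1; ring
  have hcos : Complex.cos (Real.pi * (1 + w) / 2) = -Complex.sin (Real.pi * w / 2) := by
    rw [← Complex.cos_add_pi_div_two]; congr 1; ring
  rw [sub_neg_eq_add, mul_neg, Complex.sin_neg, hs2] at hg
  rw [hs2] at hs
  have hs3 : Complex.sin (Real.pi * w / 2) ≠ 0 := fun h => hs (by rw [h]; ring)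
  have hc3 : Complex.cos (Real.pi * w / 2) ≠ 0 := fun h => hs (by rw [h]; ring)
  rw [show (1 : ℂ) - (1 + w) = -w by ring, hcos] at hfe
  rw [gammaZeta, hfe, neg_add, cpow_add _ _ (by simp [hpi]), cpow_neg_one]
  calc _ = (Gamma (-w) * Gamma (1 + w)) * (2 * ((2 * Real.pi : ℂ)⁻¹ * (2 * Real.pi) ^ (-w)) *
        -Complex.sin (Real.pi * w / 2) * riemannZeta (1 + w)) := by ring
    _ = _ := by
      rw [hg]
      field_simp

lemma HasSum.congr_both {ι : Type*} {f g : ι → ℂ} {a b : ℂ} (h : HasSum f a)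
    (hf : ∀ n, g n = f n) (ha : b = a) : HasSum g b := by
  rw [ha, show g = f from funext hf]; exact h

lemma hasSum_zeta {w : ℂ} (hw : 1 < w.re) :
    HasSum (fun n : ℕ => ((n + 1 : ℕ) : ℂ) ^ (-w)) (riemannZeta w) := by
  rw [zeta_eq_tsum_one_div_nat_add_one_cpow hw]
  have hs : Summable (fun n : ℕ => 1 / ((n : ℂ) + 1) ^ w) := by
    have := (summable_nat_add_iff 1).2 (Complex.summable_one_div_nat_cpow.2 hw)
    simpa using this
  convert hs.hasSum using 2 with n
  rw [cpow_neg, one_div]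
  push_cast
  rfl

lemma summable_rpow_neg {c : ℝ} (hc : 1 < c) :
    Summable (fun n : ℕ => ((n + 1 : ℕ) : ℝ) ^ (-c)) :=
  (summable_nat_add_iff 1).2 (Real.summable_nat_rpow.2 (by linarith))

lemma norm_nat_cpow (n : ℕ) (w : ℂ) : ‖((n + 1 : ℕ) : ℂ) ^ w‖ = ((n + 1 : ℕ) : ℝ) ^ w.re :=
  norm_natCast_cpow_of_pos (Nat.succ_pos n) w

lemma line_ne_int {c : ℝ} {m : ℕ} (h0 : m < c) (h1 : c < m + 1) (t : ℝ) (n : ℤ) :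
    (c : ℂ) + t * I ≠ n := fun h => by
  have := congrArg re h
  simp at this
  have e1 : (m : ℤ) < n := by
    have : (m : ℝ) < n := by linarith
    exact_mod_cast this
  have e2 : n < (m : ℤ) + 1 := by
    have : (n : ℝ) < m + 1 := by linarith
    exact_mod_cast this
  omega

lemma cos_pi_half_ne_zero {c : ℝ} {m : ℕ} (h0 : m < c) (h1 : c < m + 1) :
    Real.cos (Real.pi * c / 2) ≠ 0 := fun h => by
  obtain ⟨k, hk⟩ := Real.cos_eq_zero_iff.1 h
  have e : c = 2 * k + 1 := by
    have := Real.pi_pos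
    have h2 : Real.pi * c = Real.pi * (2 * k + 1) := by linarith
    exact mul_left_cancel₀ this.ne' h2
  apply line_ne_int h0 h1 0 (2 * k + 1)
  rw [e]; push_cast; ring

/-- The Dirichlet series of `ζ(1 + w)` in `gammaZeta_eq`, written as a superposition of the kernel
`1 / (2 cos (π w / 2))` at the points `x / (2 π n)`. -/
lemma gammaZeta_hasSum {c : ℝ} {m : ℕ} (h0 : m < c) (h1 : c < m + 1) (t : ℝ) {x : ℝ}
    (hx : 0 < x) :
    HasSum (fun n : ℕ => (1 / ((n + 1 : ℕ) : ℂ)) *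
      (((x / (2 * Real.pi * (n + 1 : ℕ)) : ℝ) : ℂ) ^ ((c : ℂ) + t * I) *
      (1 / (2 * Complex.cos (Real.pi * ((c : ℂ) + t * I) / 2)))))
      ((x : ℂ) ^ ((c : ℂ) + t * I) * gammaZeta ((c : ℂ) + t * I)) := by
  set w := (c : ℂ) + t * I with hw
  have hm : (0 : ℝ) ≤ m := Nat.cast_nonneg m
  have hre : w.re = c := by simp [hw]
  have hwre : 0 < w.re := by rw [hre]; linarith
  rw [gammaZeta_eq hwre (line_ne_int h0 h1 t)]
  have hz := (hasSum_zeta (w := 1 + w) (by simpa using hwre)).mul_left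
    ((x : ℂ) ^ w * (2 * Real.pi : ℂ) ^ (-w) * (1 / (2 * Complex.cos (Real.pi * w / 2))))
  refine hz.congr_both (fun n => ?_) ?_
  · have hpi := Real.pi_pos
    have hn : (0 : ℝ) < ((n + 1 : ℕ) : ℝ) := by positivity
    have hnc : ((n + 1 : ℕ) : ℂ) ≠ 0 := by exact_mod_cast hn.ne'
    have e1 : x / (2 * Real.pi * (n + 1 : ℕ)) = x * (2 * Real.pi)⁻¹ * ((n + 1 : ℕ) : ℝ)⁻¹ := by
      field_simp
    have inv (r : ℝ) (hr : 0 < r) : ((r⁻¹ : ℝ) : ℂ) ^ w = (r : ℂ) ^ (-w) := by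
      rw [ofReal_inv, inv_cpow_eq_ite, if_neg, cpow_neg]
      rw [arg_ofReal_of_nonneg hr.le]
      exact Real.pi_pos.ne
    rw [e1, ofReal_mul, ofReal_mul, ← ofReal_mul x,
      mul_cpow_ofReal_nonneg (by positivity) (by positivity), ofReal_mul,
      mul_cpow_ofReal_nonneg (by positivity) (by positivity), inv _ hn,
      inv _ (by positivity), neg_add 1 w, cpow_add _ _ hnc, cpow_neg_one, ofReal_mul]
    push_cast
    ring
  · ring

lemma integrable_gammaZeta {c : ℝ} {m : ℕ} (h0 : m < c) (h1 : c < m + 1) :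
    Integrable (fun t : ℝ => gammaZeta ((c : ℂ) + t * I)) := by
  have hm : (0 : ℝ) ≤ m := Nat.cast_nonneg m
  have hcos := cos_pi_half_ne_zero h0 h1
  have hpi : (Real.pi : ℂ) ≠ 0 := by exact_mod_cast Real.pi_ne_zero
  have e : (fun t : ℝ => gammaZeta ((c : ℂ) + t * I)) = fun t : ℝ =>
      ((2 * Real.pi : ℂ) ^ (-((c : ℂ) + t * I)) * riemannZeta (1 + ((c : ℂ) + t * I))) *
      (1 / (2 * Complex.cos (Real.pi * ((c : ℂ) + t * I) / 2))) := by
    funext t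
    rw [gammaZeta_eq (by simp; linarith) (line_ne_int h0 h1 t)]
  rw [e]
  refine (integrable_inv_cos_line hcos).bdd_mul (c := (2 * Real.pi) ^ (-c) *
    ∑' n : ℕ, ((n + 1 : ℕ) : ℝ) ^ (-(1 + c))) ?_ (Eventually.of_forall fun t => ?_)
  · refine Continuous.aestronglyMeasurable (Continuous.mul ?_ ?_)
    · exact Continuous.const_cpow (by fun_prop) (Or.inl (by simp [hpi]))
    · refine continuous_iff_continuousAt.2 fun t => ?_
      have hne : 1 + ((c : ℂ) + t * I) ≠ 1 := fun h => by
        have := congrArg re h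
        simp at this
        linarith
      exact ContinuousAt.comp (f := fun t : ℝ => 1 + ((c : ℂ) + t * I))
        (differentiableAt_riemannZeta hne).continuousAt (by fun_prop)
  · rw [norm_mul]
    have e1 : ‖(2 * Real.pi : ℂ) ^ (-((c : ℂ) + t * I))‖ = (2 * Real.pi) ^ (-c) := by
      have := norm_cpow_eq_rpow_re_of_pos Real.two_pi_pos (-((c : ℂ) + t * I))
      push_cast at this
      rw [this]; simp
    rw [e1]
    gcongr
    have hz := hasSum_zeta (w := 1 + ((c : ℂ) + t * I)) (by simp; linarith)
    rw [← hz.tsum_eq]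
    refine tsum_of_norm_bounded (summable_rpow_neg (by linarith : 1 < 1 + c)).hasSum fun n => ?_
    rw [norm_nat_cpow]
    simp

/-- Sum over `n` of the inversion formulas gives the inverse Mellin transform of `Γ(-w)ζ(-w)`. -/
lemma hasSum_inverse_gammaZeta {c : ℝ} {J : ℕ} (h0 : 2 * J + 1 < c) (h1 : c < 2 * J + 2) {x : ℝ}
    (hx : 0 < x) :
    HasSum (fun n : ℕ => (1 / ((n + 1 : ℕ) : ℂ)) *
      ((-1) ^ (J + 1) * ((x / (2 * Real.pi * (n + 1 : ℕ)) : ℝ) : ℂ) ^ (2 * J + 2) *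
        cosKernel (x / (2 * Real.pi * (n + 1 : ℕ)))))
      (((1 / (2 * Real.pi) : ℝ) : ℂ) *
        ∫ t : ℝ, (x : ℂ) ^ ((c : ℂ) + t * I) * gammaZeta ((c : ℂ) + t * I)) := by
  have g0 : ((2 * J + 1 : ℕ) : ℝ) < c := by push_cast; exact h0
  have g1 : c < ((2 * J + 1 : ℕ) : ℝ) + 1 := by push_cast; linarith
  have hcos := cos_pi_half_ne_zero g0 g1
  have hpi := Real.pi_pos
  have hc : 0 < c := by
    have : (0 : ℝ) ≤ J := Nat.cast_nonneg J
    linarith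
  have hnorm (n : ℕ) (t : ℝ) : ‖((x / (2 * Real.pi * (n + 1 : ℕ)) : ℝ) : ℂ) ^ ((c : ℂ) + t * I)‖ =
      (x / (2 * Real.pi * (n + 1 : ℕ))) ^ c := by
    rw [norm_cpow_eq_rpow_re_of_pos (by positivity)]; simp
  have hInt (n : ℕ) : Integrable (fun t : ℝ =>
      (((x / (2 * Real.pi * (n + 1 : ℕ)) : ℝ) : ℂ) ^ ((c : ℂ) + t * I) *
      (1 / (2 * Complex.cos (Real.pi * ((c : ℂ) + t * I) / 2))))) := by
    refine (integrable_inv_cos_line hcos).bdd_mul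
      (c := (x / (2 * Real.pi * (n + 1 : ℕ))) ^ c) ?_ (Eventually.of_forall fun t => (hnorm n t).le)
    refine Continuous.aestronglyMeasurable (Continuous.const_cpow (by fun_prop) (Or.inl ?_))
    have : (0 : ℝ) < x / (2 * Real.pi * (n + 1 : ℕ)) := by positivity
    exact_mod_cast this.ne'
  have hS := hasSum_integral_of_summable_integral_norm
    (F := fun (n : ℕ) (t : ℝ) => (1 / ((n + 1 : ℕ) : ℂ)) *
      (((x / (2 * Real.pi * (n + 1 : ℕ)) : ℝ) : ℂ) ^ ((c : ℂ) + t * I) *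
      (1 / (2 * Complex.cos (Real.pi * ((c : ℂ) + t * I) / 2)))))
    (fun n => (hInt n).const_mul _) (by
      have e (n : ℕ) : ∫ t : ℝ, ‖(1 / ((n + 1 : ℕ) : ℂ)) *
        (((x / (2 * Real.pi * (n + 1 : ℕ)) : ℝ) : ℂ) ^ ((c : ℂ) + t * I) *
        (1 / (2 * Complex.cos (Real.pi * ((c : ℂ) + t * I) / 2))))‖ =
        ((n + 1 : ℕ) : ℝ) ^ (-(1 + c)) * ((x / (2 * Real.pi)) ^ c *
        ∫ t : ℝ, ‖1 / (2 * Complex.cos (Real.pi * ((c : ℂ) + t * I) / 2))‖) := by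
        rw [← integral_const_mul, ← integral_const_mul]
        refine integral_congr_ae (Eventually.of_forall fun t => ?_)
        have hn : (0 : ℝ) < ((n + 1 : ℕ) : ℝ) := by positivity
        simp only [norm_mul, hnorm]
        rw [← div_div, Real.div_rpow (by positivity) hn.le, Real.rpow_neg hn.le,
          Real.rpow_add hn, Real.rpow_one, norm_div, norm_one, norm_natCast]
        field_simp
      simp_rw [e]
      exact (summable_rpow_neg (by linarith)).mul_right _)
  have hS2 := hS.mul_left (((1 / (2 * Real.pi) : ℝ) : ℂ))
  refine hS2.congr_both (fun n => ?_) ?_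
  · have := cosKernel_inversion_shifted (c := c) (y := x / (2 * Real.pi * (n + 1 : ℕ))) J h0
      (by linarith) (by positivity)
    rw [← this, integral_const_mul (1 / ((n + 1 : ℕ) : ℂ))]
    ring
  · congr 1
    refine integral_congr_ae (Eventually.of_forall fun t => ?_)
    exact (gammaZeta_hasSum g0 g1 t hx).tsum_eq.symm

/-- The partial fraction expansion of `1 / (1 - e^{-x})`, from that of the cotangent. -/
lemma hasSum_cosKernel {x : ℝ} (hx : 0 < x) :
    HasSum (fun n : ℕ => (1 / ((n + 1 : ℕ) : ℂ)) * cosKernel (x / (2 * Real.pi * (n + 1 : ℕ))))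
      (1 / (1 - Complex.exp (-x)) - 1 / x - 1 / 2) := by
  have hpi := Real.pi_pos
  have hpic : (Real.pi : ℂ) ≠ 0 := by exact_mod_cast Real.pi_ne_zero
  have hxc : (x : ℂ) ≠ 0 := by exact_mod_cast hx.ne'
  set z : ℂ := ((x / (2 * Real.pi) : ℝ) : ℂ) * I with hz
  have hzim : z.im = x / (2 * Real.pi) := by simp [hz, -ofReal_div, -ofReal_mul]
  have hzm : z ∈ integerComplement := by
    rintro ⟨n, h⟩
    have := congrArg im h
    rw [hzim] at this
    simp only [intCast_im] at this
    have : 0 < x / (2 * Real.pi) := by positivity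
    linarith
  have hS := (summable_cotTerm hzm).hasSum
  have hS2 : HasSum (cotTerm z) (Real.pi * Complex.cot (Real.pi * z) - 1 / z) := by
    rw [cot_series_rep' hzm]; exact hS
  have hS3 := hS2.mul_left (I / (2 * Real.pi))
  have hz2 : 2 * Real.pi * I * z = -x := by
    rw [hz]; push_cast; field_simp; rw [I_sq]
  have hq : (1 : ℂ) - Complex.exp (-x) ≠ 0 := by
    rw [← ofReal_neg, ← ofReal_exp, ← ofReal_one, ← ofReal_sub]
    have : Real.exp (-x) < 1 := Real.exp_lt_one_iff.2 (by linarith)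
    exact_mod_cast (sub_pos.2 this).ne'
  refine hS3.congr_both (fun n => ?_) ?_
  · have hn : ((n : ℂ) + 1) ≠ 0 := by exact_mod_cast Nat.succ_ne_zero n
    have h1 : z - ((n : ℂ) + 1) ≠ 0 := fun h => by
      have := congrArg im h
      rw [sub_im, hzim] at this
      simp at this
      rcases this with h | h
      linarith
    have h2 : z + ((n : ℂ) + 1) ≠ 0 := fun h => by
      have := congrArg im h
      rw [add_im, hzim] at this
      simp at this
      rcases this with h | h
      linarith
    have h3 : ((2 * Real.pi * (n + 1) : ℂ)) ^ 2 + x ^ 2 ≠ 0 := by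
      have : (0 : ℝ) < (2 * Real.pi * (n + 1)) ^ 2 + x ^ 2 := by positivity
      exact_mod_cast this.ne'
    have e1 : cotTerm z n = 2 * z / (z ^ 2 - ((n : ℂ) + 1) ^ 2) := by
      have : z ^ 2 - ((n : ℂ) + 1) ^ 2 = (z - (n + 1)) * (z + (n + 1)) := by ring
      rw [cotTerm, this]
      field_simp
      ring
    have e2 : z ^ 2 - ((n : ℂ) + 1) ^ 2 = -(((2 * Real.pi * (n + 1) : ℂ)) ^ 2 + x ^ 2) /
        (2 * Real.pi) ^ 2 := by
      rw [hz, mul_pow, I_sq]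
      push_cast
      field_simp
      ring
    have e3 : (1 : ℂ) + (x / (2 * Real.pi * (n + 1))) ^ 2 =
        (((2 * Real.pi * (n + 1) : ℂ)) ^ 2 + x ^ 2) / (2 * Real.pi * (n + 1)) ^ 2 := by
      field_simp
    rw [e1, e2, cosKernel]
    push_cast
    rw [e3, hz]
    push_cast
    have : (I : ℂ) ^ 2 = -1 := I_sq
    generalize hD : ((2 * Real.pi * (n + 1) : ℂ)) ^ 2 + x ^ 2 = D at *
    field_simp
    rw [I_sq]
    ring
  · rw [cot_pi_eq_exp_ratio, hz2, hz]
    push_cast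
    field_simp
    ring_nf

/-- The coefficients of the odd powers of `x` in the expansion of `1 / (1 - e^{-x})`, through
`ζ(2j + 2)` and the functional equation. -/
lemma hasSum_bernoulli_term (j : ℕ) (x : ℝ) :
    HasSum (fun n : ℕ => (1 / ((n + 1 : ℕ) : ℂ)) * (1 / Real.pi * ((-1) ^ j *
      ((x / (2 * Real.pi * (n + 1 : ℕ)) : ℝ) : ℂ) ^ (2 * j + 1))))
      (-(riemannZeta (-2 * (j : ℂ) - 1) / (Nat.factorial (2 * j + 1) : ℂ)) *
        (x : ℂ) ^ (2 * j + 1)) := by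
  have hpic : (Real.pi : ℂ) ≠ 0 := by exact_mod_cast Real.pi_ne_zero
  have hz := (hasSum_zeta (w := ((2 * j + 2 : ℕ) : ℂ)) (by
    rw [natCast_re]; push_cast
    have : (0 : ℝ) ≤ j := Nat.cast_nonneg j
    linarith)).mul_left (2 * (-1) ^ j * (x : ℂ) ^ (2 * j + 1) / (2 * Real.pi) ^ (2 * j + 2))
  have hfe := riemannZeta_one_sub (s := ((2 * j + 2 : ℕ) : ℂ))
    (fun n h => by
      have := congrArg re h
      simp only [natCast_re, neg_re] at this
      have h2 : (0 : ℝ) ≤ n := Nat.cast_nonneg n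
      have h3 : (0 : ℝ) < (2 * j + 2 : ℕ) := by positivity
      linarith)
    (by norm_cast; omega)
  refine hz.congr_both (fun n => ?_) ?_
  · have hn : ((n + 1 : ℕ) : ℂ) ≠ 0 := by exact_mod_cast Nat.succ_ne_zero n
    rw [cpow_neg, cpow_natCast]
    rw [ofReal_div, ofReal_mul, ofReal_natCast]
    generalize ((n + 1 : ℕ) : ℂ) = N at *
    push_cast
    rw [div_pow, mul_pow]
    field_simp
    ring
  · have hf : (Nat.factorial (2 * j + 1) : ℂ) ≠ 0 := by exact_mod_cast Nat.factorial_ne_zero _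
    have e1 : (1 : ℂ) - ((2 * j + 2 : ℕ) : ℂ) = -2 * (j : ℂ) - 1 := by push_cast; ring
    have e2 : Complex.cos (Real.pi * ((2 * j + 2 : ℕ) : ℂ) / 2) = (-1) ^ (j + 1) := by
      have := Complex.cos_antiperiodic.add_nat_mul_eq (x := 0) (j + 1)
      rw [Complex.cos_zero, mul_one] at this
      rw [← this]
      congr 1
      push_cast; ring
    have e3 : Gamma ((2 * j + 2 : ℕ) : ℂ) = (Nat.factorial (2 * j + 1) : ℂ) := by
      rw [← Gamma_nat_eq_factorial]; congr 1; push_cast; ring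
    rw [e1, e2, e3, cpow_neg, cpow_natCast] at hfe
    rw [hfe]
    field_simp
    ring

/-- Truncating the geometric series of `y / (1 + y ^ 2)` after `J + 1` terms. -/
lemma geom_remainder (J : ℕ) (y : ℂ) (hy : 1 + y ^ 2 ≠ 0) :
    (-1) ^ (J + 1) * y ^ (2 * J + 2) * (y / (1 + y ^ 2)) =
      y / (1 + y ^ 2) - ∑ j ∈ Finset.range (J + 1), (-1) ^ j * y ^ (2 * j + 1) := by
  induction J with
  | zero => simp; field_simp; ring
  | succ J ih =>
    rw [Finset.sum_range_succ, ← sub_sub, ← ih]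
    field_simp
    ring

/-- The remainder of `1 / (1 - e^{-x})` after its polar, constant and first `J + 1` odd terms. -/
noncomputable def bernoulliRem (J : ℕ) (x : ℝ) : ℂ :=
  1 / (1 - Complex.exp (-x)) - 1 / x - 1 / 2 - ∑ j ∈ Finset.range (J + 1),
    -(riemannZeta (-2 * (j : ℂ) - 1) / (Nat.factorial (2 * j + 1) : ℂ)) * (x : ℂ) ^ (2 * j + 1)

/-- The inverse Mellin transform of `Γ(-w) ζ(-w)` along `2J + 1 < Re w < 2J + 2` is the remainder
`bernoulliRem J`; both sides are the same sum over `n` of truncated geometric series. -/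
lemma inverse_gammaZeta {c : ℝ} {J : ℕ} (h0 : 2 * J + 1 < c) (h1 : c < 2 * J + 2) {x : ℝ}
    (hx : 0 < x) :
    ((1 / (2 * Real.pi) : ℝ) : ℂ) *
        ∫ t : ℝ, (x : ℂ) ^ ((c : ℂ) + t * I) * gammaZeta ((c : ℂ) + t * I) =
      bernoulliRem J x := by
  refine (hasSum_inverse_gammaZeta h0 h1 hx).unique ?_
  have h := (hasSum_cosKernel hx).sub
    (hasSum_sum fun j (_ : j ∈ Finset.range (J + 1)) => hasSum_bernoulli_term j x)
  rw [bernoulliRem]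
  refine h.congr_both (fun n => ?_) rfl
  rw [← Finset.mul_sum, ← mul_sub, ← Finset.mul_sum]
  congr 1
  set y := x / (2 * Real.pi * (n + 1 : ℕ)) with hy
  have hne : (1 : ℂ) + (y : ℂ) ^ 2 ≠ 0 := by
    have : (0 : ℝ) < 1 + y ^ 2 := by positivity
    exact_mod_cast this.ne'
  have e : cosKernel y = 1 / Real.pi * ((y : ℂ) / (1 + (y : ℂ) ^ 2)) := by
    rw [cosKernel]; push_cast; ring
  rw [e, ← mul_sub, ← geom_remainder J _ hne]
  ring

/-! ### Hurwitz-type sums as Mellin–Barnes integrals -/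

lemma integrableOn_gamma_real {p a : ℝ} (hp : 0 < p) (ha : 0 < a) :
    IntegrableOn (fun x : ℝ => x ^ (p - 1) * Real.exp (-(a * x))) (Ioi 0) := by
  have := integrableOn_rpow_mul_exp_neg_mul_rpow (p := 1) (s := p - 1) (b := a) (by linarith)
    one_pos ha
  simpa using this

lemma norm_cpow_mul_exp {x a : ℝ} (hx : 0 < x) (p : ℂ) :
    ‖(x : ℂ) ^ (p - 1) * Complex.exp (-(a * x))‖ = x ^ (p.re - 1) * Real.exp (-(a * x)) := by
  rw [norm_mul, norm_cpow_eq_rpow_re_of_pos hx, Complex.norm_exp]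
  simp

lemma integrableOn_gamma {p : ℂ} {a : ℝ} (hp : 0 < p.re) (ha : 0 < a) :
    IntegrableOn (fun x : ℝ => (x : ℂ) ^ (p - 1) * Complex.exp (-(a * x))) (Ioi 0) := by
  refine Integrable.mono' (integrableOn_gamma_real hp ha) ?_ ?_
  · exact Measurable.aestronglyMeasurable (by fun_prop)
  · filter_upwards [ae_restrict_mem measurableSet_Ioi] with x hx
    exact (norm_cpow_mul_exp hx p).le

lemma inv_cpow_pos {a : ℝ} (ha : 0 < a) (p : ℂ) : (1 / (a : ℂ)) ^ p = (a : ℂ) ^ (-p) := by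
  rw [one_div, inv_cpow_eq_ite, if_neg, cpow_neg]
  rw [arg_ofReal_of_nonneg ha.le]
  exact Real.pi_pos.ne

lemma norm_Gamma_le_of_pos {p : ℂ} (hp : 0 < p.re) : ‖Gamma p‖ ≤ Real.Gamma p.re := by
  rw [Gamma_eq_integral hp, GammaIntegral, Real.Gamma_eq_integral hp]
  refine norm_integral_le_of_norm_le ?_ ?_
  · exact Real.GammaIntegral_convergent hp
  · filter_upwards [ae_restrict_mem measurableSet_Ioi] with x hx
    rw [norm_mul, norm_cpow_eq_rpow_re_of_pos hx, norm_real, Real.norm_eq_abs, Real.abs_exp]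
    simp

/-- Fubini: inserting the inverse Mellin representation of `bernoulliRem` into a Laplace–Mellin
integral. -/
lemma integral_bernoulliRem {c : ℝ} {J : ℕ} (h0 : 2 * J + 1 < c) (h1 : c < 2 * J + 2) {s : ℂ}
    (hs : 0 < s.re) {a : ℝ} (ha : 0 < a) :
    IntegrableOn (fun x : ℝ => (x : ℂ) ^ (s - 1) * Complex.exp (-(a * x)) * bernoulliRem J x)
      (Ioi 0) ∧
    ∫ x in Ioi (0 : ℝ), (x : ℂ) ^ (s - 1) * Complex.exp (-(a * x)) * bernoulliRem J x =
      ((1 / (2 * Real.pi) : ℝ) : ℂ) * ∫ t : ℝ, (a : ℂ) ^ (-(s + ((c : ℂ) + t * I))) *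
        Gamma (s + ((c : ℂ) + t * I)) * gammaZeta ((c : ℂ) + t * I) := by
  have g0 : ((2 * J + 1 : ℕ) : ℝ) < c := by push_cast; exact h0
  have g1 : c < ((2 * J + 1 : ℕ) : ℝ) + 1 := by push_cast; linarith
  have hc : 0 < c := by
    have : (0 : ℝ) ≤ J := Nat.cast_nonneg J
    linarith
  have hM := integrable_gammaZeta g0 g1
  have hF : Integrable (Function.uncurry fun (x t : ℝ) =>
      ((x : ℂ) ^ (s + ((c : ℂ) + t * I) - 1) * Complex.exp (-(a * x))) *
        gammaZeta ((c : ℂ) + t * I)) ((volume.restrict (Ioi (0 : ℝ))).prod volume) := by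
    have hprod := Integrable.mul_prod
      (integrableOn_gamma_real (p := s.re + c) (a := a) (by linarith) ha) hM.norm
    refine Integrable.mono' hprod ?_ ?_
    · refine AEStronglyMeasurable.mul ?_ hM.aestronglyMeasurable.comp_snd
      exact Measurable.aestronglyMeasurable (by fun_prop)
    · have : ∀ᵐ z : ℝ × ℝ ∂((volume.restrict (Ioi (0 : ℝ))).prod volume), z.1 ∈ Ioi (0 : ℝ) :=
        Measure.quasiMeasurePreserving_fst.ae (ae_restrict_mem measurableSet_Ioi)
      filter_upwards [this] with z hz
      rw [Function.uncurry, norm_mul, norm_cpow_mul_exp hz]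
      simp
  have hpt : ∀ x ∈ Ioi (0 : ℝ), ((1 / (2 * Real.pi) : ℝ) : ℂ) * (∫ t : ℝ,
      ((x : ℂ) ^ (s + ((c : ℂ) + t * I) - 1) * Complex.exp (-(a * x))) *
        gammaZeta ((c : ℂ) + t * I)) =
      (x : ℂ) ^ (s - 1) * Complex.exp (-(a * x)) * bernoulliRem J x := fun x hx => by
    have hx : 0 < x := hx
    have hxc : (x : ℂ) ≠ 0 := by exact_mod_cast hx.ne'
    rw [← inverse_gammaZeta h0 h1 hx, mul_left_comm,
      ← integral_const_mul ((x : ℂ) ^ (s - 1) * Complex.exp (-(a * x)))]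
    congr 2
    funext t
    rw [show s + ((c : ℂ) + t * I) - 1 = (s - 1) + ((c : ℂ) + t * I) by ring, cpow_add _ _ hxc]
    ring
  constructor
  · refine IntegrableOn.congr_fun ((hF.integral_prod_left).const_mul
      (((1 / (2 * Real.pi) : ℝ) : ℂ))) (fun x hx => ?_) measurableSet_Ioi
    exact hpt x hx
  · rw [← setIntegral_congr_fun measurableSet_Ioi hpt, integral_const_mul,
      integral_integral_swap hF]
    congr 2
    funext t
    rw [integral_mul_const, integral_cpow_mul_exp_neg_mul_Ioi (by simp; linarith) ha,
      inv_cpow_pos ha]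

/-- The Hurwitz-type sum `∑ (m + a)^{-s}` expanded asymptotically in `a`, with its remainder as a
Mellin–Barnes integral. -/
lemma hasSum_hurwitz {c : ℝ} {J : ℕ} (h0 : 2 * J + 1 < c) (h1 : c < 2 * J + 2) {s : ℂ}
    (hs : 1 < s.re) {a : ℝ} (ha : 0 < a) :
    HasSum (fun m : ℕ => (((m : ℝ) + a : ℝ) : ℂ) ^ (-s))
      ((1 / 2) * (a : ℂ) ^ (-s) + (a : ℂ) ^ (-(s - 1)) / (s - 1)
        - (∑ j ∈ Finset.range (J + 1), Gamma (s + 2 * (j : ℂ) + 1) /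
              ((Nat.factorial (2 * j + 1) : ℂ) * Gamma s) * riemannZeta (-2 * (j : ℂ) - 1) *
              (a : ℂ) ^ (-(s + 2 * (j : ℂ) + 1)))
        + ((1 / (2 * Real.pi) : ℝ) : ℂ) * ((Gamma s)⁻¹ * ∫ t : ℝ,
            (a : ℂ) ^ (-(s + ((c : ℂ) + t * I))) *
            Gamma (s + ((c : ℂ) + t * I)) * gammaZeta ((c : ℂ) + t * I))) := by
  have hG : Gamma s ≠ 0 := Gamma_ne_zero_of_re_pos (by linarith)
  have hs1 : s - 1 ≠ 0 := fun h => by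
    have := congrArg re h
    simp at this
    linarith
  have hGs : Gamma s = (s - 1) * Gamma (s - 1) := by
    have := Gamma_add_one (s - 1) hs1
    rwa [sub_add_cancel] at this
  have hmel := hasSum_mellin (ι := ℕ) (a := fun _ => 1) (p := fun m : ℕ => (m : ℝ) + a) (s := s)
    (F := fun x : ℝ => Complex.exp (-(a * x)) * (1 / (1 - Complex.exp (-x))))
    (fun m => Or.inr (by positivity)) (by linarith)
    (fun x hx => by
      have hx : 0 < x := hx
      have hq : ‖Complex.exp (-x)‖ < 1 := by
        rw [Complex.norm_exp]
        simpa using hx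
      have := (hasSum_geometric_of_norm_lt_one hq).mul_left (Complex.exp (-(a * x)))
      refine this.congr_both (fun m => ?_) (by rw [one_div])
      rw [← Complex.exp_nat_mul, ← Complex.exp_add, one_mul, ofReal_exp]
      congr 1
      push_cast; ring)
    (by
      simp only [norm_one]
      have := Real.summable_one_div_nat_add_rpow a s.re
      refine (this.2 hs).congr fun m => ?_
      rw [abs_of_pos (by positivity)])
  have hS : HasSum (fun m : ℕ => (((m : ℝ) + a : ℝ) : ℂ) ^ (-s)) ((Gamma s)⁻¹ * mellin
      (fun x : ℝ => Complex.exp (-(a * x)) * (1 / (1 - Complex.exp (-x)))) s) := by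
    refine (hmel.mul_left (Gamma s)⁻¹).congr_both (fun m => ?_) rfl
    rw [cpow_neg]
    field_simp
  refine hS.congr_both (fun _ => rfl) ?_
  obtain ⟨hI, hIv⟩ := integral_bernoulliRem h0 h1 (s := s) (by linarith) ha
  have hre (j : ℕ) : 0 < (s + 2 * (j : ℂ) + 1).re := by
    have : (0 : ℝ) ≤ j := Nat.cast_nonneg j
    simp
    linarith
  have hs0 : 0 < s.re := by linarith
  have hs1' : 0 < (s - 1).re := by simpa using hs
  have e : EqOn (fun x : ℝ => (x : ℂ) ^ (s - 1) •
        (Complex.exp (-(a * x)) * (1 / (1 - Complex.exp (-x)))))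
      (fun x : ℝ => (((x : ℂ) ^ (s - 1) * Complex.exp (-(a * x)) * bernoulliRem J x
        + (x : ℂ) ^ (s - 1 - 1) * Complex.exp (-(a * x)))
        + (1 / 2) * ((x : ℂ) ^ (s - 1) * Complex.exp (-(a * x))))
        + ∑ j ∈ Finset.range (J + 1),
          -(riemannZeta (-2 * (j : ℂ) - 1) / (Nat.factorial (2 * j + 1) : ℂ)) *
            ((x : ℂ) ^ (s + 2 * (j : ℂ) + 1 - 1) * Complex.exp (-(a * x)))) (Ioi 0) := by
    intro x hx
    have hx : 0 < x := hx
    have hxc : (x : ℂ) ≠ 0 := by exact_mod_cast hx.ne'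
    have e1 (j : ℕ) : (x : ℂ) ^ (s + 2 * (j : ℂ) + 1 - 1) =
        (x : ℂ) ^ (s - 1) * (x : ℂ) ^ (2 * j + 1) := by
      rw [← cpow_natCast, ← cpow_add _ _ hxc]
      congr 1
      push_cast; ring
    have e2 : (x : ℂ) ^ (s - 1 - 1) = (x : ℂ) ^ (s - 1) * (1 / x) := by
      rw [cpow_sub _ _ hxc, cpow_one]; ring
    simp only [e1, e2, smul_eq_mul, bernoulliRem]
    rw [show (∑ j ∈ Finset.range (J + 1),
          -(riemannZeta (-2 * (j : ℂ) - 1) / (Nat.factorial (2 * j + 1) : ℂ)) *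
            ((x : ℂ) ^ (s - 1) * (x : ℂ) ^ (2 * j + 1) * Complex.exp (-(a * x)))) =
        (x : ℂ) ^ (s - 1) * Complex.exp (-(a * x)) * ∑ j ∈ Finset.range (J + 1),
          -(riemannZeta (-2 * (j : ℂ) - 1) / (Nat.factorial (2 * j + 1) : ℂ)) *
            (x : ℂ) ^ (2 * j + 1) by
      rw [Finset.mul_sum]
      exact Finset.sum_congr rfl fun j _ => by ring]
    ring
  rw [mellin, setIntegral_congr_fun measurableSet_Ioi e]
  have i1 := integrableOn_gamma hs1' ha
  have i2 := (integrableOn_gamma hs0 ha).const_mul (1 / 2)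
  have i3 (j : ℕ) := (integrableOn_gamma (hre j) ha).const_mul
    (-(riemannZeta (-2 * (j : ℂ) - 1) / (Nat.factorial (2 * j + 1) : ℂ)))
  have i4 : IntegrableOn (fun x : ℝ => (x : ℂ) ^ (s - 1) * Complex.exp (-(a * x)) *
      bernoulliRem J x + (x : ℂ) ^ (s - 1 - 1) * Complex.exp (-(a * x))) (Ioi 0) := hI.add i1
  have i5 : IntegrableOn (fun x : ℝ => ((x : ℂ) ^ (s - 1) * Complex.exp (-(a * x)) *
      bernoulliRem J x + (x : ℂ) ^ (s - 1 - 1) * Complex.exp (-(a * x))) +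
      (1 / 2) * ((x : ℂ) ^ (s - 1) * Complex.exp (-(a * x)))) (Ioi 0) := i4.add i2
  rw [integral_add i5 (integrable_finsetSum _ fun j _ => i3 j),
    integral_add i4 i2, integral_add hI i1, integral_finsetSum _ (fun j _ => i3 j), hIv,
    integral_const_mul, integral_cpow_mul_exp_neg_mul_Ioi hs0 ha,
    integral_cpow_mul_exp_neg_mul_Ioi hs1' ha, inv_cpow_pos ha, inv_cpow_pos ha]
  have e3 (j : ℕ) : (∫ x in Ioi (0 : ℝ),
      -(riemannZeta (-2 * (j : ℂ) - 1) / (Nat.factorial (2 * j + 1) : ℂ)) *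
            ((x : ℂ) ^ (s + 2 * (j : ℂ) + 1 - 1) * Complex.exp (-(a * x)))) =
      -(Gamma s * (Gamma (s + 2 * (j : ℂ) + 1) /
              ((Nat.factorial (2 * j + 1) : ℂ) * Gamma s) * riemannZeta (-2 * (j : ℂ) - 1) *
              (a : ℂ) ^ (-(s + 2 * (j : ℂ) + 1)))) := by
    rw [integral_const_mul, integral_cpow_mul_exp_neg_mul_Ioi (hre j) ha, inv_cpow_pos ha]
    have : (Nat.factorial (2 * j + 1) : ℂ) ≠ 0 := by exact_mod_cast Nat.factorial_ne_zero _
    field_simp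
  have e4 : (a : ℂ) ^ (-(s - 1)) * Gamma (s - 1) =
      Gamma s * ((a : ℂ) ^ (-(s - 1)) / (s - 1)) := by
    rw [hGs]; field_simp
  rw [Finset.sum_congr rfl fun j _ => e3 j, Finset.sum_neg_distrib, ← Finset.mul_sum, e4]
  generalize (∑ j ∈ Finset.range (J + 1), Gamma (s + 2 * (j : ℂ) + 1) /
    ((Nat.factorial (2 * j + 1) : ℂ) * Gamma s) * riemannZeta (-2 * (j : ℂ) - 1) *
    (a : ℂ) ^ (-(s + 2 * (j : ℂ) + 1))) = S
  generalize (∫ t : ℝ, (a : ℂ) ^ (-(s + ((c : ℂ) + t * I))) *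
    Gamma (s + ((c : ℂ) + t * I)) * gammaZeta ((c : ℂ) + t * I)) = T
  field_simp
  ring

/-! ### Summation over the divisor -/

/-- The summand of the Dirichlet series of `wigertD k`, unfolded over factorisations `n = d * m`:
it is `n^{-s}` if `d ^ k ≤ n` and `0` otherwise, at the pair `p = (d, m)`. -/
def wigertSummand (k : ℕ) (s : ℂ) (p : ℕ × ℕ) : ℂ :=
  if p.1 ^ k ≤ p.1 * p.2 then ((p.1 * p.2 : ℕ) : ℂ) ^ (-s) else 0

lemma summable_wigertSummand (k : ℕ) {s : ℂ} (hs : 1 < s.re) :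
    Summable (fun p : ℕ+ × ℕ+ => wigertSummand k s (p.1, p.2)) := by
  have h1 : Summable (fun n : ℕ+ => ((n : ℕ) : ℝ) ^ (-s.re)) :=
    (summable_pnat_iff_summable_succ (f := fun n : ℕ => (n : ℝ) ^ (-s.re))).2
      (summable_rpow_neg hs)
  refine Summable.of_norm_bounded
    (h1.mul_of_nonneg h1 (fun _ => by positivity) (fun _ => by positivity)) fun p => ?_
  rw [wigertSummand]
  split_ifs with h
  · rw [norm_natCast_cpow_of_pos (Nat.mul_pos p.1.pos p.2.pos), neg_re, Nat.cast_mul,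
      Real.mul_rpow (Nat.cast_nonneg _) (Nat.cast_nonneg _)]
  · rw [norm_zero]; positivity

lemma sum_wigertSummand (k : ℕ) (s : ℂ) (n : ℕ) :
    ∑ p ∈ n.divisorsAntidiagonal, wigertSummand k s p = (wigertD k n : ℂ) * (n : ℂ) ^ (-s) := by
  have : ∀ p ∈ n.divisorsAntidiagonal,
      wigertSummand k s p = (if p.1 ^ k ≤ n then (1 : ℂ) else 0) * (n : ℂ) ^ (-s) := fun p hp => by
    rw [wigertSummand, (Nat.mem_divisorsAntidiagonal.1 hp).1, ite_mul, one_mul, zero_mul]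
  rw [Finset.sum_congr rfl this, ← Finset.sum_mul,
    Nat.sum_divisorsAntidiagonal (fun d _ => if d ^ k ≤ n then (1 : ℂ) else 0), wigertD,
    Finset.card_filter]
  push_cast
  rfl

/-- For `d` fixed, the condition `d ^ k ≤ d * m` means `m ≥ d ^ (k - 1)`, so the sum over `m` is a
Hurwitz-type sum with shift `d ^ (k - 1)`. -/
lemma hasSum_wigertSummand_right {k : ℕ} (hk : 1 ≤ k) {s : ℂ} {d : ℕ} (hd : 0 < d) {h : ℂ}
    (hh : HasSum (fun m : ℕ => (((m : ℝ) + (d : ℝ) ^ (k - 1) : ℝ) : ℂ) ^ (-s)) h) :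
    HasSum (fun m : ℕ+ => wigertSummand k s (d, m)) ((d : ℂ) ^ (-s) * h) := by
  have hpos (m : ℕ) : 0 < m + d ^ (k - 1) := by positivity
  let g : ℕ → ℕ+ := fun m => ⟨m + d ^ (k - 1), hpos m⟩
  have hg : Function.Injective g := fun m m' e => by
    have := congrArg PNat.val e
    simpa [g] using this
  have hcond (m : ℕ) : d ^ k ≤ d * m ↔ d ^ (k - 1) ≤ m := by
    obtain ⟨l, rfl⟩ := Nat.exists_eq_add_of_le' hk
    rw [pow_succ', Nat.add_sub_cancel]
    exact Nat.mul_le_mul_left_iff hd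
  refine (hg.hasSum_iff fun m hm => ?_).1
    ((hh.mul_left ((d : ℂ) ^ (-s))).congr_both (fun m => ?_) rfl)
  · rw [wigertSummand, if_neg]
    rw [hcond]
    intro hle
    refine hm ⟨m - d ^ (k - 1), ?_⟩
    apply PNat.eq
    exact Nat.sub_add_cancel hle
  · have e : ((g m : ℕ)) = m + d ^ (k - 1) := rfl
    rw [Function.comp_apply, wigertSummand, if_pos (by rw [hcond, e]; exact Nat.le_add_left _ _),
      e, Nat.cast_mul, natCast_mul_natCast_cpow]
    push_cast
    rfl

/-- The Dirichlet series of `wigertD k` rearranged by the divisor `d = n + 1`; `h d` is the value of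
the Hurwitz-type sum with shift `d ^ (k - 1)`. -/
lemma tsum_wigertD {k : ℕ} (hk : 1 ≤ k) {s : ℂ} (hs : 1 < s.re) {h : ℕ → ℂ}
    (hh : ∀ d : ℕ, 0 < d →
      HasSum (fun m : ℕ => (((m : ℝ) + (d : ℝ) ^ (k - 1) : ℝ) : ℂ) ^ (-s)) (h d)) :
    ∑' j : ℕ+, (wigertD k j : ℂ) * ((j : ℕ) : ℂ) ^ (-s) =
      ∑' n : ℕ, ((n + 1 : ℕ) : ℂ) ^ (-s) * h (n + 1) := by
  have hS := (summable_wigertSummand k hs).hasSum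
  have h1 := hS.prod_fiberwise fun d => hasSum_wigertSummand_right hk d.pos (hh d d.pos)
  have h2 := ((sigmaAntidiagonalEquivProd.hasSum_iff).2 hS).sigma
    (g := fun n : ℕ+ => (wigertD k n : ℂ) * ((n : ℕ) : ℂ) ^ (-s)) fun n => by
      rw [← sum_wigertSummand, ← Finset.sum_coe_sort]
      exact hasSum_fintype _
  rw [h2.tsum_eq, ← h1.tsum_eq]
  exact tsum_pnat_eq_tsum_succ (f := fun d : ℕ => (d : ℂ) ^ (-s) * h d)

lemma cpow_combine (n m : ℕ) (s p : ℂ) :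
    ((n + 1 : ℕ) : ℂ) ^ (-s) * ((((n + 1 : ℕ) : ℝ) ^ m : ℝ) : ℂ) ^ (-p) =
      ((n + 1 : ℕ) : ℂ) ^ (-(s + m * p)) := by
  have h0 : ((n + 1 : ℕ) : ℂ) ≠ 0 := by exact_mod_cast n.succ_ne_zero
  have ha : ((n + 1 : ℕ) : ℂ).arg = 0 := by
    rw [← ofReal_natCast]; exact arg_ofReal_of_nonneg (Nat.cast_nonneg _)
  rw [ofReal_pow, ofReal_natCast, ← cpow_nat_mul' (by rw [ha]; simp [Real.pi_pos])
    (by rw [ha]; simp [Real.pi_pos.le]), ← cpow_add _ _ h0]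
  congr 1
  ring

lemma integrable_mul_Gamma {c : ℝ} {m : ℕ} (h0 : m < c) (h1 : c < m + 1) {s : ℂ}
    (hs : 0 < s.re) : Integrable (fun t : ℝ => Gamma (s + ((c : ℂ) + t * I)) / Gamma s *
      gammaZeta ((c : ℂ) + t * I)) := by
  have hm : (0 : ℝ) ≤ m := Nat.cast_nonneg m
  have hre (t : ℝ) : (s + ((c : ℂ) + t * I)).re = s.re + c := by simp
  refine (integrable_gammaZeta h0 h1).bdd_mul (c := Real.Gamma (s.re + c) / ‖Gamma s‖) ?_ ?_
  · refine Continuous.aestronglyMeasurable ?_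
    refine Continuous.div_const (continuous_iff_continuousAt.2 fun t => ?_) _
    refine ContinuousAt.comp (g := Gamma) (DifferentiableAt.continuousAt (𝕜 := ℂ) ?_)
      (by fun_prop)
    refine differentiableAt_Gamma _ fun j hj => ?_
    have := congrArg re hj
    have hj0 : (0 : ℝ) ≤ j := Nat.cast_nonneg j
    rw [hre] at this
    simp at this
    linarith
  · refine Eventually.of_forall fun t => ?_
    rw [norm_div]
    gcongr
    have := norm_Gamma_le_of_pos (p := s + ((c : ℂ) + t * I)) (by rw [hre]; linarith)
    rwa [hre] at this

/-- Termwise integration of the Dirichlet series of `ζ` along a vertical line to the right of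
`Re = 1`, against an integrable weight. -/
lemma integrable_mul_zeta_s7 {G : ℝ → ℂ} (hG : Integrable G) {z : ℂ} (r : ℝ) (hz : 1 < z.re) :
    Integrable (fun t : ℝ => riemannZeta (z + r * t * I) * G t) ∧
    HasSum (fun n : ℕ => ∫ t : ℝ, ((n + 1 : ℕ) : ℂ) ^ (-(z + r * t * I)) * G t)
      (∫ t : ℝ, riemannZeta (z + r * t * I) * G t) := by
  have hre (t : ℝ) : (z + r * t * I).re = z.re := by simp
  have hnorm (n : ℕ) (t : ℝ) : ‖((n + 1 : ℕ) : ℂ) ^ (-(z + r * t * I))‖ =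
      ((n + 1 : ℕ) : ℝ) ^ (-z.re) := by rw [norm_nat_cpow, neg_re, hre]
  have hsum (t : ℝ) := hasSum_zeta (w := z + r * t * I) (by rw [hre]; exact hz)
  constructor
  · refine hG.bdd_mul (c := ∑' n : ℕ, ((n + 1 : ℕ) : ℝ) ^ (-z.re)) ?_ ?_
    · refine Continuous.aestronglyMeasurable (continuous_iff_continuousAt.2 fun t => ?_)
      refine ContinuousAt.comp (g := riemannZeta) (DifferentiableAt.continuousAt (𝕜 := ℂ) ?_)
        (by fun_prop)
      refine differentiableAt_riemannZeta fun h => ?_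
      have := congrArg re h
      rw [hre, one_re] at this
      linarith
    · refine Eventually.of_forall fun t => ?_
      rw [← (hsum t).tsum_eq]
      exact tsum_of_norm_bounded (summable_rpow_neg hz).hasSum fun n => (hnorm n t).le
  · have key := hasSum_integral_of_summable_integral_norm (μ := volume)
      (F := fun (n : ℕ) (t : ℝ) => ((n + 1 : ℕ) : ℂ) ^ (-(z + r * t * I)) * G t)
      (fun n => ?_) ?_
    · refine key.congr_both (fun _ => rfl) ?_
      congr 1
      funext t
      rw [tsum_mul_right, (hsum t).tsum_eq]
    · refine hG.bdd_mul (c := ((n + 1 : ℕ) : ℝ) ^ (-z.re)) ?_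
        (Eventually.of_forall fun t => (hnorm n t).le)
      exact Measurable.aestronglyMeasurable (by fun_prop)
    · simp only [norm_mul, hnorm, integral_const_mul]
      exact (summable_rpow_neg hz).mul_right _

end Helpers

theorem wigert_dirichlet_series_shifted_line (k : ℕ) (hk : 2 ≤ k) (s : ℂ) (hs : 1 < s.re)
    (J : ℕ) (ε : ℝ) (hε0 : 0 < ε) (hε1 : ε < 1) :
    MeasureTheory.Integrable (fun t : ℝ =>
      Complex.Gamma (s + (2 * (J : ℂ) + 1 + (ε : ℂ) + (t : ℂ) * Complex.I)) *
        Complex.Gamma (-(2 * (J : ℂ) + 1 + (ε : ℂ) + (t : ℂ) * Complex.I)) / Complex.Gamma s *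
        riemannZeta (-(2 * (J : ℂ) + 1 + (ε : ℂ) + (t : ℂ) * Complex.I)) *
        riemannZeta ((k : ℂ) * s +
          ((k : ℂ) - 1) * (2 * (J : ℂ) + 1 + (ε : ℂ) + (t : ℂ) * Complex.I))) ∧
    ∑' j : ℕ+, (wigertD k j : ℂ) * ((j : ℕ) : ℂ) ^ (-s)
      = (1 / 2) * riemannZeta ((k : ℂ) * s) + riemannZeta ((k : ℂ) * s - ((k : ℂ) - 1)) / (s - 1)
        - (∑ j ∈ Finset.range (J + 1),
            Complex.Gamma (s + 2 * (j : ℂ) + 1) /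
              ((Nat.factorial (2 * j + 1) : ℂ) * Complex.Gamma s) *
              riemannZeta (-2 * (j : ℂ) - 1) *
              riemannZeta ((k : ℂ) * s + ((k : ℂ) - 1) * (2 * (j : ℂ) + 1)))
        + ((1 / (2 * Real.pi) : ℝ) : ℂ) * ∫ t : ℝ,
            Complex.Gamma (s + (2 * (J : ℂ) + 1 + (ε : ℂ) + (t : ℂ) * Complex.I)) *
              Complex.Gamma (-(2 * (J : ℂ) + 1 + (ε : ℂ) + (t : ℂ) * Complex.I)) / Complex.Gamma s *
              riemannZeta (-(2 * (J : ℂ) + 1 + (ε : ℂ) + (t : ℂ) * Complex.I)) *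
              riemannZeta ((k : ℂ) * s +
                ((k : ℂ) - 1) * (2 * (J : ℂ) + 1 + (ε : ℂ) + (t : ℂ) * Complex.I)) := by
  set c : ℝ := 2 * J + 1 + ε with hc
  have hcC : (2 * (J : ℂ) + 1 + (ε : ℂ)) = (c : ℂ) := by rw [hc]; push_cast; ring
  simp only [hcC]
  have h0 : 2 * (J : ℝ) + 1 < c := by linarith
  have h1 : c < 2 * (J : ℝ) + 2 := by linarith
  have hcpos : 0 < c := by positivity
  have hm : ((k - 1 : ℕ) : ℂ) = (k : ℂ) - 1 := by
    rw [Nat.cast_sub (by omega), Nat.cast_one]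
  have hk1 : (0 : ℝ) ≤ (k : ℝ) - 1 := by
    have : (2 : ℝ) ≤ k := by exact_mod_cast hk
    linarith
  have hks : (k : ℝ) - 1 + 1 < k * s.re := by
    have := mul_lt_mul_of_pos_left hs (show (0 : ℝ) < k by exact_mod_cast (by omega : 0 < k))
    linarith
  have hG := integrable_mul_Gamma (m := 2 * J + 1) (c := c) (s := s) (by push_cast; linarith)
    (by push_cast; linarith) (by linarith)
  set z : ℂ := (k : ℂ) * s + ((k : ℂ) - 1) * c with hz
  have hzre : 1 < z.re := by
    have := mul_nonneg hk1 hcpos.le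
    rw [hz]
    simp
    linarith
  have hzt (t : ℝ) : (k : ℂ) * s + ((k : ℂ) - 1) * ((c : ℂ) + t * Complex.I) =
      z + (((k : ℝ) - 1 : ℝ) : ℂ) * t * Complex.I := by
    rw [hz]; push_cast; ring
  obtain ⟨hI, hIsum⟩ := integrable_mul_zeta_s7 hG ((k : ℝ) - 1) hzre
  have hInt : (fun t : ℝ => Complex.Gamma (s + ((c : ℂ) + (t : ℂ) * Complex.I)) *
        Complex.Gamma (-((c : ℂ) + (t : ℂ) * Complex.I)) / Complex.Gamma s *
        riemannZeta (-((c : ℂ) + (t : ℂ) * Complex.I)) *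
        riemannZeta ((k : ℂ) * s + ((k : ℂ) - 1) * ((c : ℂ) + (t : ℂ) * Complex.I))) =
      fun t : ℝ => riemannZeta (z + (((k : ℝ) - 1 : ℝ) : ℂ) * t * Complex.I) *
        (Complex.Gamma (s + ((c : ℂ) + t * Complex.I)) / Complex.Gamma s *
          gammaZeta ((c : ℂ) + t * Complex.I)) := by
    funext t
    rw [hzt, gammaZeta]
    ring
  rw [hInt]
  refine ⟨hI, ?_⟩
  rw [tsum_wigertD (by omega) hs fun d hd =>
    hasSum_hurwitz h0 h1 hs (a := (d : ℝ) ^ (k - 1)) (by positivity)]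
  refine HasSum.tsum_eq ?_
  have s1 := hasSum_zeta (w := (k : ℂ) * s) (by simp; linarith)
  have s2 := hasSum_zeta (w := (k : ℂ) * s - ((k : ℂ) - 1)) (by simp; linarith)
  have s3 (j : ℕ) := hasSum_zeta (w := (k : ℂ) * s + ((k : ℂ) - 1) * (2 * (j : ℂ) + 1)) (by
    have := mul_nonneg hk1 (show (0 : ℝ) ≤ 2 * j + 1 by positivity)
    simp
    linarith)
  have s4 := hasSum_sum (s := Finset.range (J + 1)) fun j _ => (s3 j).mul_left
    (Complex.Gamma (s + 2 * (j : ℂ) + 1) / ((Nat.factorial (2 * j + 1) : ℂ) * Complex.Gamma s) *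
              riemannZeta (-2 * (j : ℂ) - 1))
  refine ((((s1.mul_left (1 / 2)).add (s2.div_const (s - 1))).sub s4).add
    (hIsum.mul_left ((1 / (2 * Real.pi) : ℝ) : ℂ))).congr_both (fun n => ?_) rfl
  have c1 := cpow_combine n (k - 1) s s
  have c2 := cpow_combine n (k - 1) s (s - 1)
  have c3 (j : ℕ) := cpow_combine n (k - 1) s (s + 2 * (j : ℂ) + 1)
  have c4 (t : ℝ) := cpow_combine n (k - 1) s (s + ((c : ℂ) + t * Complex.I))
  rw [hm, show s + ((k : ℂ) - 1) * s = k * s by ring] at c1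
  rw [hm, show s + ((k : ℂ) - 1) * (s - 1) = k * s - ((k : ℂ) - 1) by ring] at c2
  simp only [hm] at c3 c4
  rw [mul_add, mul_sub, mul_add, Finset.mul_sum, ← c1, ← c2]
  congr 1
  · congr 1
    · ring
    · refine Finset.sum_congr rfl fun j _ => ?_
      rw [show (k : ℂ) * s + ((k : ℂ) - 1) * (2 * (j : ℂ) + 1) =
        s + ((k : ℂ) - 1) * (s + 2 * (j : ℂ) + 1) by ring, ← c3]
      ring
  · rw [mul_left_comm]
    congr 1
    rw [← MeasureTheory.integral_const_mul, ← MeasureTheory.integral_const_mul]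
    congr 1
    funext t
    rw [← hzt, show (k : ℂ) * s + ((k : ℂ) - 1) * ((c : ℂ) + t * Complex.I) =
      s + ((k : ℂ) - 1) * (s + ((c : ℂ) + t * Complex.I)) by ring, ← c4]
    ring
end
end
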